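/- Fix an integer d ≥ 2 and δ ∈ (0,1). Let a^{jk} : ℝ² → ℝ (1 ≤ j,k ≤ d) be smooth functions of (t,x¹) only, with a^{jk} = a^{kj} and δ|θ|² ≤ Σ_{j,k=1}^d a^{jk}(t,x¹) θ^j θ^k ≤ δ⁻¹|θ|² for all (t,x¹) and θ ∈ ℝ^d. Let u : ℝ^{d+1} → ℝ be smooth with compact support, let λ ≥ 0, and set f = u_t + Σ_{j,k=1}^d a^{jk} u_{x^j x^k} − λu. Then there is a constant N = N(δ) such that for every ξ ∈ ℝ^{d-1} with |ξ|² + λ > 0, (|ξ|² + λ) (∫_{ℝ²} |ũ(t,x¹,ξ)|² dx¹ dt)^{1/2} ≤ N (∫_{ℝ²} |f̃(t,x¹,ξ)|² dx¹ dt)^{1/2}. -/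

import Mathlib

open MeasureTheory

/-- Partial derivative in `t` of a function on `ℝ^{d+1} = ℝ × (Fin d → ℝ)`. -/
noncomputable def pdt {d : ℕ} (u : ℝ × (Fin d → ℝ) → ℝ) : ℝ × (Fin d → ℝ) → ℝ :=
  fun p => fderiv ℝ u p (1, 0)

/-- Partial derivative in `x^j`. -/
noncomputable def pdx {d : ℕ} (j : Fin d) (u : ℝ × (Fin d → ℝ) → ℝ) :
    ℝ × (Fin d → ℝ) → ℝ :=
  fun p => fderiv ℝ u p (0, Pi.single j 1)

/-- Second partial derivative in `x^j, x^k`. -/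
noncomputable def pdxx {d : ℕ} (j k : Fin d) (u : ℝ × (Fin d → ℝ) → ℝ) :
    ℝ × (Fin d → ℝ) → ℝ :=
  pdx j (pdx k u)

/-- Partial Fourier transform in the variables `x' ∈ ℝ^{d-1}` (here the spatial
dimension is `d = n+1`, `x¹` is the 0-th spatial coordinate and `x'` the rest):
`ṽ(t,x¹,ξ) = ∫_{ℝ^n} v(t,x¹,x') e^{−i ξ·x'} dx'`. -/
noncomputable def pFourier {n : ℕ} (v : ℝ × (Fin (n + 1) → ℝ) → ℝ)
    (t y : ℝ) (ξ : Fin n → ℝ) : ℂ :=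
  ∫ x' : Fin n → ℝ,
    (v (t, Fin.cons y x') : ℂ) * Complex.exp (-Complex.I * ((∑ j, ξ j * x' j : ℝ) : ℂ))

/-!
After the Fourier transform in `x'`, `V = ũ` solves `V_t + a V_yy + 2 i b V_y - c V = f̃` on `ℝ²`,
and ellipticity bounds the Schur complement: `c - b ^ 2 / a ≥ μ := δ (|ξ| ^ 2 + λ)`. Multiplying by
a gauge `e ^ (i β y)` with `β = b / a` frozen at a point absorbs the first-order term there, so that
`|V|` is a subsolution of the real equation `∂ₜ + a ∂ᵧᵧ - μ` with source `-|f̃|`. Since `β` varies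
from point to point, this is made precise with an explicit monotone difference scheme: `|V|` is a
subsolution of the scheme with source `|f̃| + η`, hence lies below its exact solution `g`. Testing
the equation of `g` against its second difference, where a time derivative costs little and the
damping term has a sign, gives `μ ‖g‖ ≤ (3 / δ ^ 2 + 1) ‖|f̃| + η‖` in `L²`, for `a` merely
measurable. Let `η → 0`.
-/

lemma le_one_of_le_inv {δ : ℝ} (h : δ ≤ δ⁻¹) : δ ≤ 1 := by
  by_contra! hδ_gt
  exact (hδ_gt.trans_le h).not_ge (inv_le_one_of_one_le₀ hδ_gt.le)

lemma abs_le_inv_of_le {δ α : ℝ} (hδ : 0 < δ) (hα : δ ≤ α) (hα' : α ≤ δ⁻¹) : |α| ≤ δ⁻¹ := by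
  rwa [abs_of_pos (hδ.trans_le hα)]

lemma cube_div_mul_le {δ α : ℝ} (hδ : 0 < δ) (hδ' : δ ≤ 1) (hα : α ≤ δ⁻¹) :
    δ ^ 3 / 32 * α ≤ 1 / 32 := by
  calc δ ^ 3 / 32 * α ≤ δ ^ 3 / 32 * δ⁻¹ := by gcongr
    _ = δ ^ 2 / 32 := by field_simp
    _ ≤ 1 / 32 := by grw [pow_le_one₀ hδ.le hδ']

lemma abs_div_le_sqrt_div_of_sq_div_le {a b δ C : ℝ} (hδ : 0 < δ) (ha : δ ≤ a)
    (hC : b ^ 2 / a ≤ C) : |b / a| ≤ √(C / δ) := by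
  have ha0 : 0 < a := hδ.trans_le ha
  refine Real.abs_le_sqrt ((le_div_iff₀ hδ).2 ?_)
  calc (b / a) ^ 2 * δ ≤ (b / a) ^ 2 * a := by gcongr
    _ = b ^ 2 / a := by field_simp
    _ ≤ C := hC

lemma abs_le_sqrt_mul_of_sq_div_le {a b A C : ℝ} (ha : 0 < a) (haA : a ≤ A)
    (hC : b ^ 2 / a ≤ C) : |b| ≤ √(C * A) := by
  have hC0 : 0 ≤ C := (by positivity : 0 ≤ b ^ 2 / a).trans hC
  refine Real.abs_le_sqrt ?_
  calc b ^ 2 = b ^ 2 / a * a := by field_simp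
    _ ≤ C * A := by gcongr

lemma le_three_div_mul_of_quadratic_le {δ x φ : ℝ} (hδ : 0 < δ) (hδ' : δ ≤ 1) (hφ : 0 ≤ φ)
    (h : δ * x ^ 2 - φ * x ≤ δ ^ 3 / 4 * (δ⁻¹ * x + φ) ^ 2) : x ≤ 3 / δ * φ := by
  have expand : δ ^ 3 / 4 * (δ⁻¹ * x + φ) ^ 2 = δ / 4 * (x + δ * φ) ^ 2 := by
    field_simp
  rw [expand] at h
  by_contra! hx
  have hφx : 3 * φ < δ * x := by
    rwa [div_mul_eq_mul_div, div_lt_iff₀ hδ, mul_comm x] at hx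
  have hx0 : 0 < x := by
    by_contra! hx0
    nlinarith
  have hsum : x + δ * φ ≤ 4 / 3 * x := by nlinarith
  have upper : δ / 4 * (x + δ * φ) ^ 2 ≤ δ / 4 * (4 / 3 * x) ^ 2 := by gcongr
  have lower : δ * x ^ 2 - δ * x / 3 * x < δ * x ^ 2 - φ * x := by nlinarith
  nlinarith [mul_pos hδ (pow_pos hx0 2)]

section ImplicitStep

variable {E : Type*} [NormedAddCommGroup E] [NormedSpace ℝ E] {g G y F : E} {ν : ℝ}

lemma mul_norm_le_of_eq_damped_add (hν' : ν ≤ 1) (hG : ‖G‖ ≤ ‖g‖)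
    (hg : g = G + y - ν • G + F) : ν * ‖g‖ ≤ ‖y‖ + ‖F‖ := by
  have hsplit : g = (1 - ν) • G + y + F := by rw [hg, sub_smul, one_smul]; abel
  have htri : ‖g‖ ≤ (1 - ν) * ‖G‖ + ‖y‖ + ‖F‖ :=
    calc ‖g‖ = ‖(1 - ν) • G + y + F‖ := congrArg norm hsplit
      _ ≤ ‖(1 - ν) • G‖ + ‖y‖ + ‖F‖ := norm_add₃_le
      _ = _ := by rw [norm_smul, Real.norm_of_nonneg (sub_nonneg.2 hν')]
  nlinarith

lemma norm_sub_le_of_eq_damped_add (hν : 0 ≤ ν) (hν' : ν ≤ 1) (hG : ‖G‖ ≤ ‖g‖)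
    (hg : g = G + y - ν • G + F) : ‖g - G‖ ≤ 2 * (‖y‖ + ‖F‖) := by
  have hsplit : g - G = y - ν • G + F := by rw [hg]; abel
  calc ‖g - G‖ = ‖y - ν • G + F‖ := congrArg norm hsplit
    _ ≤ ‖y‖ + ‖ν • G‖ + ‖F‖ := (norm_add_le _ _).trans (by gcongr; exact norm_sub_le _ _)
    _ = ‖y‖ + ν * ‖G‖ + ‖F‖ := by rw [norm_smul ν, Real.norm_of_nonneg hν]
    _ ≤ ‖y‖ + (‖y‖ + ‖F‖) + ‖F‖ := by
      gcongr
      exact (mul_le_mul_of_nonneg_left hG hν).trans (mul_norm_le_of_eq_damped_add hν' hG hg)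
    _ = 2 * (‖y‖ + ‖F‖) := by ring

end ImplicitStep

section DiscreteEnergy

open scoped InnerProductSpace

variable {E : Type*} [NormedAddCommGroup E] [InnerProductSpace ℝ E] (S : E →ₗᵢ[ℝ] E)

/-- The difference operator `S - 1` of a linear isometry `S`. When `S` is a translation,
`isometryDiff S (isometryDiff S w)` is the centred second difference of `S w`. -/
def isometryDiff : E →ₗ[ℝ] E := S.toLinearMap - 1

lemma isometryDiff_apply (w : E) : isometryDiff S w = S w - w := rfl

lemma norm_isometryDiff_le (w : E) : ‖isometryDiff S w‖ ≤ 2 * ‖w‖ := by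
  simpa only [isometryDiff_apply, S.norm_map, ← two_mul] using norm_sub_le (S w) w

lemma inner_isometryDiff_isometryDiff (z w : E) :
    ⟪z, isometryDiff S (isometryDiff S w)⟫_ℝ = -⟪isometryDiff S z, isometryDiff S (S w)⟫_ℝ := by
  simp only [isometryDiff_apply, map_sub, inner_sub_left, inner_sub_right, S.inner_map_map]
  ring

lemma inner_map_isometryDiff_isometryDiff_nonpos (w : E) :
    ⟪S w, isometryDiff S (isometryDiff S w)⟫_ℝ ≤ 0 := by
  rw [inner_isometryDiff_isometryDiff]
  exact neg_nonpos.2 real_inner_self_nonneg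

lemma inner_sub_isometryDiff_isometryDiff_le {g w : E}
    (h : ‖isometryDiff S (S w)‖ ≤ ‖isometryDiff S g‖) :
    ⟪g - S w, isometryDiff S (isometryDiff S w)⟫_ℝ ≤ 2 * ‖g - S w‖ ^ 2 := by
  rw [inner_isometryDiff_isometryDiff, map_sub]
  set p := isometryDiff S g
  set q := isometryDiff S (S w)
  have hpq : ‖p - q‖ ≤ 2 * ‖g - S w‖ := by
    simpa only [map_sub] using norm_isometryDiff_le S (g - S w)
  have polarization : ‖p‖ ^ 2 = ‖p - q‖ ^ 2 + 2 * ⟪p - q, q⟫_ℝ + ‖q‖ ^ 2 := by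
    simpa only [sub_add_cancel] using norm_add_sq_real (p - q) q
  nlinarith [pow_le_pow_left₀ (norm_nonneg _) hpq 2, pow_le_pow_left₀ (norm_nonneg _) h 2]

-- Test the equation for `g` against the second difference: parabolicity controls it from below, and
-- the discrete time derivative costs only `2 ‖g - S w‖ ^ 2`, which is small because `r` is small.
lemma mul_norm_le_of_scheme {g w Y F : E} {δ r ν : ℝ} (hδ : 0 < δ) (hδ' : δ ≤ 1)
    (hr : r = δ ^ 3 / 32) (hν : 0 ≤ ν) (hν' : ν ≤ 1)
    (hg : g = S w + r • Y - ν • S w + F)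
    (hw : ‖S w‖ ≤ ‖g‖) (hDw : ‖isometryDiff S (S w)‖ ≤ ‖isometryDiff S g‖)
    (hYle : ‖Y‖ ≤ δ⁻¹ * ‖isometryDiff S (isometryDiff S w)‖)
    (hYge : δ * ‖isometryDiff S (isometryDiff S w)‖ ^ 2
      ≤ ⟪Y, isometryDiff S (isometryDiff S w)⟫_ℝ) :
    ν * ‖g‖ ≤ (3 / δ ^ 2 + 1) * ‖F‖ := by
  set X := isometryDiff S (isometryDiff S w)
  have hr0 : 0 < r := by rw [hr]; positivity
  have hrY : ‖r • Y‖ ≤ r * (δ⁻¹ * ‖X‖) := by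
    rw [norm_smul, Real.norm_of_nonneg hr0.le]
    gcongr
  have lower : r * (δ * ‖X‖ ^ 2) - ‖F‖ * ‖X‖ ≤ ⟪g - S w, X⟫_ℝ := by
    have hsplit : g - S w = r • Y - ν • S w + F := by rw [hg]; abel
    rw [hsplit, inner_add_left, inner_sub_left, real_inner_smul_left, real_inner_smul_left]
    nlinarith [inner_map_isometryDiff_isometryDiff_nonpos S w,
      neg_le_of_abs_le (abs_real_inner_le_norm F X)]
  have upper : ⟪g - S w, X⟫_ℝ ≤ 8 * (r * (δ⁻¹ * ‖X‖) + ‖F‖) ^ 2 :=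
    calc ⟪g - S w, X⟫_ℝ ≤ 2 * ‖g - S w‖ ^ 2 := inner_sub_isometryDiff_isometryDiff_le S hDw
      _ ≤ 2 * (2 * (‖r • Y‖ + ‖F‖)) ^ 2 := by
        gcongr; exact norm_sub_le_of_eq_damped_add hν hν' hw hg
      _ ≤ 2 * (2 * (r * (δ⁻¹ * ‖X‖) + ‖F‖)) ^ 2 := by gcongr
      _ = _ := by ring
  have hX : ‖X‖ ≤ 3 / δ * (‖F‖ / r) := by
    refine le_three_div_mul_of_quadratic_le hδ hδ' (by positivity) ?_
    refine le_of_mul_le_mul_left ?_ hr0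
    calc r * (δ * ‖X‖ ^ 2 - ‖F‖ / r * ‖X‖) = r * (δ * ‖X‖ ^ 2) - ‖F‖ * ‖X‖ := by field_simp
      _ ≤ 8 * (r * (δ⁻¹ * ‖X‖) + ‖F‖) ^ 2 := lower.trans upper
      _ = r * (8 * r * (δ⁻¹ * ‖X‖ + ‖F‖ / r) ^ 2) := by field_simp
      _ = r * (δ ^ 3 / 4 * (δ⁻¹ * ‖X‖ + ‖F‖ / r) ^ 2) := by rw [hr]; ring
  calc ν * ‖g‖ ≤ ‖r • Y‖ + ‖F‖ := mul_norm_le_of_eq_damped_add hν' hw hg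
    _ ≤ r * (δ⁻¹ * (3 / δ * (‖F‖ / r))) + ‖F‖ := by grw [hrY, hX]
    _ = (3 / δ ^ 2 + 1) * ‖F‖ := by field_simp

end DiscreteEnergy

section SquareIntegrable

open scoped InnerProductSpace

variable {α : Type*} [MeasurableSpace α] {μ : Measure α} {f g : α → ℝ}

lemma inner_toLp_toLp (hf : MemLp f 2 μ) (hg : MemLp g 2 μ) :
    ⟪hf.toLp f, hg.toLp g⟫_ℝ = ∫ p, f p * g p ∂μ := by
  rw [L2.inner_def]
  refine integral_congr_ae ?_
  filter_upwards [hf.coeFn_toLp, hg.coeFn_toLp] with p hfp hgp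
  rw [hfp, hgp, RCLike.inner_apply', conj_trivial]

lemma norm_toLp_sq (hf : MemLp f 2 μ) : ‖hf.toLp f‖ ^ 2 = ∫ p, f p ^ 2 ∂μ := by
  rw [← real_inner_self_eq_norm_sq, inner_toLp_toLp]
  simp only [sq]

lemma norm_toLp_eq_sqrt (hf : MemLp f 2 μ) : ‖hf.toLp f‖ = √(∫ p, f p ^ 2 ∂μ) := by
  rw [← norm_toLp_sq hf, Real.sqrt_sq (norm_nonneg _)]

lemma sqrt_integral_add_sq_le (hf : MemLp f 2 μ) (hg : MemLp g 2 μ) :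
    √(∫ p, (f p + g p) ^ 2 ∂μ) ≤ √(∫ p, f p ^ 2 ∂μ) + √(∫ p, g p ^ 2 ∂μ) := by
  have htri : ‖(hf.add hg).toLp (f + g)‖ ≤ ‖hf.toLp f‖ + ‖hg.toLp g‖ := by
    rw [MemLp.toLp_add]
    exact norm_add_le _ _
  simpa only [norm_toLp_eq_sqrt, Pi.add_apply] using htri

lemma sqrt_integral_const_mul_sq {r : ℝ} (hr : 0 ≤ r) (f : α → ℝ) :
    √(∫ p, (r * f p) ^ 2 ∂μ) = r * √(∫ p, f p ^ 2 ∂μ) := by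
  simp_rw [mul_pow]
  rw [integral_const_mul, Real.sqrt_mul (sq_nonneg r), Real.sqrt_sq hr]

variable {a : α → ℝ} {A : ℝ}

lemma memLp_bounded_smul {E : Type*} [NormedAddCommGroup E] [NormedSpace ℝ E] {q : ENNReal}
    {W : α → E} (ha : Measurable a) (hA : ∀ p, |a p| ≤ A) (hW : MemLp W q μ) :
    MemLp (fun p => a p • W p) q μ := by
  refine hW.of_le_mul (c := A) (ha.aestronglyMeasurable.smul hW.1) (.of_forall fun p => ?_)
  grw [norm_smul, Real.norm_eq_abs, hA p]

lemma memLp_bounded_mul (ha : Measurable a) (hA : ∀ p, |a p| ≤ A) (hg : MemLp g 2 μ) :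
    MemLp (a * g) 2 μ :=
  memLp_bounded_smul ha hA hg

lemma norm_toLp_bounded_mul_le (ha : Measurable a) (hA : ∀ p, |a p| ≤ A) (hg : MemLp g 2 μ) :
    ‖(memLp_bounded_mul ha hA hg).toLp _‖ ≤ A * ‖hg.toLp g‖ := by
  refine Lp.norm_le_mul_norm_of_ae_le_mul ?_
  filter_upwards [(memLp_bounded_mul ha hA hg).coeFn_toLp, hg.coeFn_toLp] with p hap hgp
  rw [hap, hgp, Pi.mul_apply, norm_mul]
  grw [Real.norm_eq_abs (a p), hA p]

lemma mul_norm_toLp_sq_le_inner {δ : ℝ} (ha : Measurable a) (hA : ∀ p, |a p| ≤ A)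
    (hδ : ∀ p, δ ≤ a p) (hg : MemLp g 2 μ) :
    δ * ‖hg.toLp g‖ ^ 2 ≤ ⟪(memLp_bounded_mul ha hA hg).toLp _, hg.toLp g⟫_ℝ := by
  rw [inner_toLp_toLp, norm_toLp_sq, ← integral_const_mul]
  refine integral_mono (hg.integrable_sq.const_mul δ)
    ((memLp_bounded_mul ha hA hg).integrable_mul hg) fun p => ?_
  have := mul_le_mul_of_nonneg_right (hδ p) (sq_nonneg (g p))
  simpa only [Pi.mul_apply, mul_assoc, ← sq] using this

end SquareIntegrable

section OrderedComparison

variable {R M : Type*} [Ring R] [AddCommGroup M] [Module R M] {Q : Module.End R M} {v F : M}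

lemma geom_sum_apply_eq_map_add {N : ℕ} (hF : (Q ^ N) F = 0) :
    (∑ m ∈ Finset.range N, Q ^ m) F = Q ((∑ m ∈ Finset.range N, Q ^ m) F) + F := by
  have h := congrArg (fun P : Module.End R M => P F) (mul_neg_geom_sum Q N)
  simp only [Module.End.mul_apply, LinearMap.sub_apply, Module.End.one_apply, hF, sub_zero] at h
  rw [← sub_eq_iff_eq_add', h]

lemma le_geom_sum_add_of_le_map_add [PartialOrder M] [IsOrderedAddMonoid M]
    (hQ : ∀ g, 0 ≤ g → 0 ≤ Q g) (hv : v ≤ Q v + F) (N : ℕ) :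
    v ≤ (∑ m ∈ Finset.range N, Q ^ m) F + (Q ^ N) v := by
  have hQN : ∀ m g, 0 ≤ g → 0 ≤ (Q ^ m) g := by
    intro m
    induction m with
    | zero => exact fun g hg => hg
    | succ m ih => exact fun g hg => by rw [pow_succ]; exact ih _ (hQ g hg)
  induction N with
  | zero => simp
  | succ N ih =>
    have hstep : (Q ^ N) v ≤ (Q ^ N) F + (Q ^ (N + 1)) v := by
      have := hQN N _ (sub_nonneg.2 hv)
      rwa [map_sub, map_add, sub_nonneg, add_comm, ← Module.End.mul_apply, ← pow_succ] at this
    calc v ≤ (∑ m ∈ Finset.range N, Q ^ m) F + (Q ^ N) v := ih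
      _ ≤ (∑ m ∈ Finset.range N, Q ^ m) F + ((Q ^ N) F + (Q ^ (N + 1)) v) := by gcongr
      _ = _ := by rw [Finset.sum_range_succ, LinearMap.add_apply, add_assoc]

end OrderedComparison

section Scheme

/-- The time shift `g ↦ g(t + h, y)`, cut off to the half-plane `t ≥ -R`. The cutoff makes the
iterates of the scheme vanish eventually. -/
noncomputable def cutoffShift (R h : ℝ) : Module.End ℝ (ℝ × ℝ → ℝ) where
  toFun g := {p : ℝ × ℝ | -R ≤ p.1}.indicator fun p => g (p + (h, 0))
  map_add' _ _ := Set.indicator_add _ _ _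
  map_smul' c _ := Set.indicator_const_smul _ c _

/-- The (unnormalised) centred second difference in the second variable. -/
def secondDifference (ε : ℝ) : Module.End ℝ (ℝ × ℝ → ℝ) where
  toFun g p := g (p + (0, ε)) + g (p + (0, -ε)) - 2 * g p
  map_add' f g := by ext p; simp only [Pi.add_apply]; ring
  map_smul' c g := by ext p; simp only [Pi.smul_apply, smul_eq_mul, RingHom.id_apply]; ring

/-- One step, backwards in time, of the explicit scheme for `∂ₜ + a ∂ᵧᵧ - μ` with time step `h` and
space step `ε`, where `h = r ε ^ 2` and `ν = μ h`. -/
noncomputable def schemeStep (R h ε r ν : ℝ) (a : ℝ × ℝ → ℝ) : Module.End ℝ (ℝ × ℝ → ℝ) :=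
  (1 + r • (LinearMap.mulLeft ℝ a * secondDifference ε) - ν • 1) * cutoffShift R h

variable {R h ε r ν : ℝ} {a g : ℝ × ℝ → ℝ}

lemma schemeStep_apply_eq_cutoffShift_add : schemeStep R h ε r ν a g = cutoffShift R h g
    + r • (a * secondDifference ε (cutoffShift R h g)) - ν • cutoffShift R h g :=
  rfl

lemma schemeStep_apply_of_le {p : ℝ × ℝ} (hp : -R ≤ p.1) : schemeStep R h ε r ν a g p =
    (1 - ν - 2 * (r * a p)) * g (p + (h, 0)) + r * a p * (g (p + (h, ε)) + g (p + (h, -ε))) := by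
  have hcutoff (s : ℝ) : cutoffShift R h g (p + (0, s)) = g (p + (h, s)) := by
    simp [cutoffShift, hp, add_assoc]
  have hcutoff₀ : cutoffShift R h g p = g (p + (h, 0)) := by
    simpa [Prod.mk_zero_zero] using hcutoff 0
  simp only [schemeStep_apply_eq_cutoffShift_add, secondDifference, LinearMap.coe_mk,
    AddHom.coe_mk, Pi.add_apply, Pi.sub_apply, Pi.smul_apply, Pi.mul_apply, smul_eq_mul, hcutoff,
    hcutoff₀]
  ring

lemma schemeStep_apply_of_lt {p : ℝ × ℝ} (hp : p.1 < -R) : schemeStep R h ε r ν a g p = 0 := by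
  simp [schemeStep_apply_eq_cutoffShift_add, cutoffShift, secondDifference, hp]

lemma schemeStep_nonneg (hr : 0 ≤ r) (ha : ∀ p, 0 ≤ a p) (hcfl : ∀ p, ν + 2 * (r * a p) ≤ 1)
    (hg : 0 ≤ g) : 0 ≤ schemeStep R h ε r ν a g := by
  intro p
  rcases lt_or_ge p.1 (-R) with hp | hp
  · exact (schemeStep_apply_of_lt hp).ge
  · rw [schemeStep_apply_of_le hp]
    have hg' : ∀ q, 0 ≤ g q := hg
    have := mul_nonneg (show 0 ≤ 1 - ν - 2 * (r * a p) by linarith [hcfl p]) (hg' (p + (h, 0)))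
    have := mul_nonneg (mul_nonneg hr (ha p)) (add_nonneg (hg' (p + (h, ε))) (hg' (p + (h, -ε))))
    simp only [Pi.zero_apply]
    linarith

lemma schemeStep_pow_apply_of_lt {R' : ℝ} (hg : ∀ p : ℝ × ℝ, R' < p.1 → g p = 0) (m : ℕ)
    {p : ℝ × ℝ} (hp : R' < p.1 + m * h) : (schemeStep R h ε r ν a ^ m) g p = 0 := by
  induction m generalizing p with
  | zero => exact hg p (by simpa using hp)
  | succ m ih =>
    have hnext (s : ℝ) : (schemeStep R h ε r ν a ^ m) g (p + (h, s)) = 0 := by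
      refine ih ?_
      push_cast at hp
      simp only [Prod.fst_add]
      linarith
    rw [pow_succ', Module.End.mul_apply]
    rcases lt_or_ge p.1 (-R) with hpR | hpR
    · exact schemeStep_apply_of_lt hpR
    · simp only [schemeStep_apply_of_le hpR, hnext, add_zero, mul_zero]

lemma schemeStep_pow_succ_eq_zero {R' : ℝ} (hg : ∀ p : ℝ × ℝ, R' < p.1 → g p = 0) {m : ℕ}
    (hm : R + R' < (m + 1 : ℕ) * h) : (schemeStep R h ε r ν a ^ (m + 1)) g = 0 := by
  ext p
  rcases lt_or_ge p.1 (-R) with hp | hp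
  · rw [pow_succ', Module.End.mul_apply, schemeStep_apply_of_lt hp, Pi.zero_apply]
  · exact schemeStep_pow_apply_of_lt hg _ (by linarith)

lemma memLp_comp_add_right (hg : MemLp g 2) (w : ℝ × ℝ) : MemLp (fun p => g (p + w)) 2 :=
  hg.comp_measurePreserving (measurePreserving_add_right volume w)

lemma memLp_cutoffShift (hg : MemLp g 2) : MemLp (cutoffShift R h g) 2 :=
  (memLp_comp_add_right hg (h, 0)).indicator (measurableSet_le measurable_const measurable_fst)

lemma memLp_secondDifference (hg : MemLp g 2) : MemLp (secondDifference ε g) 2 :=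
  ((memLp_comp_add_right hg (0, ε)).add (memLp_comp_add_right hg (0, -ε))).sub (hg.const_mul 2)

variable {A : ℝ}

lemma memLp_schemeStep (ha : Measurable a) (hA : ∀ p, |a p| ≤ A) (hg : MemLp g 2) :
    MemLp (schemeStep R h ε r ν a g) 2 :=
  ((memLp_cutoffShift hg).add ((memLp_bounded_mul ha hA
    (memLp_secondDifference (memLp_cutoffShift hg))).const_smul r)).sub
      ((memLp_cutoffShift hg).const_smul ν)

lemma memLp_geom_sum_schemeStep (ha : Measurable a) (hA : ∀ p, |a p| ≤ A) (hg : MemLp g 2)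
    (N : ℕ) : MemLp ((∑ m ∈ Finset.range N, schemeStep R h ε r ν a ^ m) g) 2 := by
  rw [LinearMap.sum_apply]
  refine memLp_finsetSum' _ fun m hm => ?_
  clear hm
  induction m with
  | zero => exact hg
  | succ m ih => rw [pow_succ']; exact memLp_schemeStep ha hA ih

lemma norm_toLp_cutoffShift_le (hg : MemLp g 2) :
    ‖(memLp_cutoffShift (R := R) (h := h) hg).toLp _‖ ≤ ‖hg.toLp g‖ := by
  rw [Lp.norm_toLp, Lp.norm_toLp]
  refine ENNReal.toReal_mono hg.eLpNorm_ne_top ((eLpNorm_indicator_le _).trans_eq ?_)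
  exact eLpNorm_comp_measurePreserving hg.1 (measurePreserving_add_right volume (h, 0))

/-- Translation by `ε` in the second variable, as an isometry of `L²(ℝ²)`. -/
noncomputable def spaceShift (ε : ℝ) :
    Lp ℝ 2 (volume : Measure (ℝ × ℝ)) →ₗᵢ[ℝ] Lp ℝ 2 (volume : Measure (ℝ × ℝ)) :=
  Lp.compMeasurePreservingₗᵢ ℝ (· + (0, ε)) (measurePreserving_add_right volume (0, ε))

lemma spaceShift_toLp (hg : MemLp g 2) :
    spaceShift ε (hg.toLp g) = (memLp_comp_add_right hg (0, ε)).toLp _ := rfl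

lemma isometryDiff_spaceShift_toLp (hg : MemLp g 2) : isometryDiff (spaceShift ε) (hg.toLp g) =
    ((memLp_comp_add_right hg (0, ε)).sub hg).toLp _ := rfl

lemma spaceShift_toLp_comp_neg (hg : MemLp g 2) :
    spaceShift ε ((memLp_comp_add_right hg (0, -ε)).toLp _) = hg.toLp g := by
  simp [spaceShift_toLp, add_assoc, Prod.mk_zero_zero]

lemma isometryDiff_isometryDiff_spaceShift_toLp (hg : MemLp g 2) :
    isometryDiff (spaceShift ε)
      (isometryDiff (spaceShift ε) ((memLp_comp_add_right hg (0, -ε)).toLp _)) =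
    (memLp_secondDifference hg).toLp (secondDifference ε g) := by
  rw [isometryDiff_spaceShift_toLp, isometryDiff_spaceShift_toLp]
  congr 1
  ext p
  simp only [secondDifference, LinearMap.coe_mk, AddHom.coe_mk, Pi.sub_apply, add_assoc,
    Prod.mk_add_mk, add_zero, add_neg_cancel, Prod.mk_zero_zero]
  ring

theorem mul_norm_toLp_le_of_eq_schemeStep_add {δ : ℝ} {F : ℝ × ℝ → ℝ} (hδ : 0 < δ) (hδ' : δ ≤ 1)
    (hr : r = δ ^ 3 / 32) (hν : 0 ≤ ν) (hν' : ν ≤ 1) (ha : Measurable a)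
    (haδ : ∀ p, δ ≤ a p) (haδ' : ∀ p, a p ≤ δ⁻¹) (hg : MemLp g 2) (hF : MemLp F 2)
    (hgF : g = schemeStep R h ε r ν a g + F) :
    ν * ‖hg.toLp g‖ ≤ (3 / δ ^ 2 + 1) * ‖hF.toLp F‖ := by
  have hA p : |a p| ≤ δ⁻¹ := abs_le_inv_of_le hδ (haδ p) (haδ' p)
  have hG : MemLp (cutoffShift R h g) 2 := memLp_cutoffShift hg
  have hX := memLp_secondDifference (ε := ε) hG
  have hSw := spaceShift_toLp_comp_neg (ε := ε) hG
  have hDDw := isometryDiff_isometryDiff_spaceShift_toLp (ε := ε) hG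
  refine mul_norm_le_of_scheme (spaceShift ε) (w := (memLp_comp_add_right hG (0, -ε)).toLp _)
    (Y := (memLp_bounded_mul ha hA hX).toLp _) hδ hδ' hr hν hν' ?_ ?_ ?_ ?_ ?_
  · rw [hSw, ← MemLp.toLp_const_smul, ← MemLp.toLp_const_smul, ← MemLp.toLp_add, ← MemLp.toLp_sub,
      ← MemLp.toLp_add]
    exact MemLp.toLp_congr _ _ (.of_eq hgF)
  · rw [hSw]
    exact norm_toLp_cutoffShift_le hg
  · rw [hSw, isometryDiff_spaceShift_toLp, isometryDiff_spaceShift_toLp]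
    have hcomm : cutoffShift R h (fun p => g (p + (0, ε)) - g p) =
        fun p => cutoffShift R h g (p + (0, ε)) - cutoffShift R h g p := by
      ext p
      by_cases hp : -R ≤ p.1 <;> simp [cutoffShift, hp, add_assoc]
    refine le_of_eq_of_le ?_ (norm_toLp_cutoffShift_le (R := R) (h := h)
      ((memLp_comp_add_right hg (0, ε)).sub hg))
    exact congrArg norm (MemLp.toLp_congr _ _ (.of_eq hcomm.symm))
  · rw [hDDw]
    exact norm_toLp_bounded_mul_le ha hA hX
  · rw [hDDw]
    exact mul_norm_toLp_sq_le_inner ha hA haδ hX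

theorem mul_sqrt_integral_le_of_le_schemeStep_add {δ R' : ℝ} {v F : ℝ × ℝ → ℝ} (hδ : 0 < δ)
    (hr : r = δ ^ 3 / 32) (hh : 0 < h) (hν : 0 ≤ ν) (hν' : ν ≤ 1 / 2) (ha : Measurable a)
    (haδ : ∀ p, δ ≤ a p) (haδ' : ∀ p, a p ≤ δ⁻¹) (hv : MemLp v 2) (hF : MemLp F 2) (hv0 : 0 ≤ v)
    (hvR : ∀ p : ℝ × ℝ, R' < p.1 → v p = 0) (hFR : ∀ p : ℝ × ℝ, R' < p.1 → F p = 0)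
    (hvF : v ≤ schemeStep R h ε r ν a v + F) :
    ν * √(∫ p, v p ^ 2) ≤ (3 / δ ^ 2 + 1) * √(∫ p, F p ^ 2) := by
  have hδ' : δ ≤ 1 := le_one_of_le_inv ((haδ 0).trans (haδ' 0))
  have hr0 : 0 < r := by rw [hr]; positivity
  have hcfl p : ν + 2 * (r * a p) ≤ 1 := by
    linarith [hr ▸ cube_div_mul_le hδ hδ' (haδ' p)]
  have hA p : |a p| ≤ δ⁻¹ := abs_le_inv_of_le hδ (haδ p) (haδ' p)
  obtain ⟨m, hm⟩ := exists_nat_gt ((R + R') / h)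
  have hm' : R + R' < (m + 1 : ℕ) * h := by
    rw [div_lt_iff₀ hh] at hm
    push_cast
    linarith
  set g := (∑ k ∈ Finset.range (m + 1), schemeStep R h ε r ν a ^ k) F
  have hg : MemLp g 2 := memLp_geom_sum_schemeStep ha hA hF _
  have hgF : g = schemeStep R h ε r ν a g + F :=
    geom_sum_apply_eq_map_add (schemeStep_pow_succ_eq_zero hFR hm')
  have hvg : v ≤ g := by
    have := le_geom_sum_add_of_le_map_add
      (fun _ => schemeStep_nonneg hr0.le (fun p => hδ.le.trans (haδ p)) hcfl) hvF (m + 1)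
    rwa [schemeStep_pow_succ_eq_zero hvR hm', add_zero] at this
  have hsq : ∫ p, v p ^ 2 ≤ ∫ p, g p ^ 2 :=
    integral_mono hv.integrable_sq hg.integrable_sq fun p => pow_le_pow_left₀ (hv0 p) (hvg p) 2
  calc ν * √(∫ p, v p ^ 2) ≤ ν * √(∫ p, g p ^ 2) := by gcongr
    _ ≤ (3 / δ ^ 2 + 1) * √(∫ p, F p ^ 2) := by
      rw [← norm_toLp_eq_sqrt hg, ← norm_toLp_eq_sqrt hF]
      exact mul_norm_toLp_le_of_eq_schemeStep_add hδ hδ' hr hν (by linarith) ha haδ haδ' hg hF hgF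

end Scheme

section SecondDifference

open Filter Topology

variable {E : Type*} [NormedAddCommGroup E] [NormedSpace ℝ E]

lemma norm_secondDifference_sub_le {z z' z'' : ℝ → E} {c : E} {η ε : ℝ} (hε : 0 ≤ ε)
    (hz : ∀ s, HasDerivAt z (z' s) s) (hz' : ∀ s, HasDerivAt z' (z'' s) s)
    (hc : ∀ s ∈ Set.Icc (-ε) ε, ‖z'' s - c‖ ≤ η) :
    ‖z ε + z (-ε) - (2 : ℝ) • z 0 - ε ^ 2 • c‖ ≤ 2 * η * ε ^ 2 := by
  set w : ℝ → E := fun s => z s + z (-s) - s ^ 2 • c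
  set w' : ℝ → E := fun s => z' s - z' (-s) - (2 * s) • c
  have hw (s : ℝ) : HasDerivAt w (w' s) s := by
    have hneg := (hz (-s)).scomp s (hasDerivAt_neg s)
    refine (((hz s).add hneg).sub ((hasDerivAt_pow 2 s).smul_const c)).congr_deriv ?_
    simp [w', sub_eq_add_neg]
  have hw' (s : ℝ) : HasDerivAt w' ((z'' s - c) + (z'' (-s) - c)) s := by
    have hneg := (hz' (-s)).scomp s (hasDerivAt_neg s)
    refine (((hz' s).sub hneg).sub (((hasDerivAt_id s).const_mul 2).smul_const c)).congr_deriv ?_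
    module
  have hw'_le : ∀ s ∈ Set.Icc 0 ε, ‖w' s‖ ≤ 2 * η * ε := fun s hs => by
    have hw'₀ : w' 0 = 0 := by simp [w']
    have := norm_image_sub_le_of_norm_deriv_le_segment' (fun t _ => (hw' t).hasDerivWithinAt)
      (C := 2 * η) (fun t ht => ?_) s hs
    · rw [hw'₀, sub_zero, sub_zero] at this
      have hη : 0 ≤ η := (norm_nonneg _).trans (hc 0 ⟨by linarith, hε⟩)
      exact this.trans (by gcongr; exact hs.2)
    · have h₁ := hc t ⟨by linarith [ht.1], ht.2.le⟩
      have h₂ := hc (-t) ⟨by linarith [ht.2], by linarith [ht.1]⟩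
      exact (norm_add_le _ _).trans (by linarith)
  have := norm_image_sub_le_of_norm_deriv_le_segment' (fun t _ => (hw t).hasDerivWithinAt)
    (fun t ht => hw'_le t ⟨ht.1, ht.2.le⟩) ε ⟨hε, le_rfl⟩
  convert this using 1
  · congr 1
    simp only [w, neg_zero, ne_eq, OfNat.ofNat_ne_zero, not_false_eq_true, zero_pow, zero_smul]
    module
  · ring

variable {P : Type*} [NormedAddCommGroup P] [NormedSpace ℝ P]

lemma hasDerivAt_prodMk_right {Z : P × ℝ → E} (hZ : Differentiable ℝ Z) (x : P) (s : ℝ) :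
    HasDerivAt (fun s => Z (x, s)) (fderiv ℝ Z (x, s) (0, 1)) s :=
  (hZ (x, s)).hasFDerivAt.comp_hasDerivAt s ((hasDerivAt_const s x).prodMk (hasDerivAt_id s))

theorem eventually_norm_secondDifference_sub_le {Z : P × ℝ → E} (hZ : ContDiff ℝ 2 Z) {K : Set P}
    (hK : IsCompact K) {η : ℝ} (hη : 0 < η) :
    ∀ᶠ ε in 𝓝[>] (0 : ℝ), ∀ x ∈ K,
      ‖Z (x, ε) + Z (x, -ε) - (2 : ℝ) • Z (x, 0) - ε ^ 2 • deriv (deriv fun s => Z (x, s)) 0‖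
        ≤ η * ε ^ 2 := by
  set Z' : P × ℝ → E := fun w => fderiv ℝ Z w (0, 1)
  set Z'' : P × ℝ → E := fun w => fderiv ℝ Z' w (0, 1)
  have hZ' : ContDiff ℝ 1 Z' := (hZ.fderiv_right (m := 1) le_rfl).clm_apply contDiff_const
  have hZ'' : Continuous Z'' := (hZ'.continuous_fderiv one_ne_zero).clm_apply continuous_const
  have hderiv (x : P) (s : ℝ) := hasDerivAt_prodMk_right (hZ.differentiable two_ne_zero) x s
  have hderiv' (x : P) (s : ℝ) := hasDerivAt_prodMk_right (hZ'.differentiable one_ne_zero) x s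
  have hsmall : ∀ᶠ s in 𝓝 (0 : ℝ), ∀ x ∈ K, ‖Z'' (x, s) - Z'' (x, 0)‖ < η / 2 := by
    refine hK.eventually_forall_of_forall_eventually fun x _ => ?_
    have hcont : Continuous fun q : ℝ × P => ‖Z'' (q.2, q.1) - Z'' (q.2, 0)‖ := by fun_prop
    exact hcont.continuousAt.eventually_lt_const (by simpa using half_pos hη)
  obtain ⟨ρ, hρ, hsmall⟩ := Metric.eventually_nhds_iff.1 hsmall
  filter_upwards [Ioo_mem_nhdsGT hρ] with ε hε x hx
  have hd : (deriv fun s => Z (x, s)) = fun s => Z' (x, s) := funext fun s => (hderiv x s).deriv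
  rw [hd, (hderiv' x 0).deriv]
  refine (norm_secondDifference_sub_le hε.1.le (hderiv x) (hderiv' x) (η := η / 2) ?_).trans_eq
    (by ring)
  intro s hs
  exact (hsmall (by simpa using (abs_le.2 hs).trans_lt hε.2) x hx).le

end SecondDifference

section Consistency

open Complex Filter Topology

/-- The operator `V ↦ V_t + a V_yy + 2 i b V_y - c V` with coefficients frozen at `p = (t, y)`. -/
noncomputable def parabolicOp (a b c : ℝ) (V : ℝ × ℝ → ℂ) (p : ℝ × ℝ) : ℂ :=
  fderiv ℝ V p (1, 0) + a * fderiv ℝ (fun q => fderiv ℝ V q (0, 1)) p (0, 1)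
    + 2 * I * b * fderiv ℝ V p (0, 1) - c * V p

/-- One half of the scheme: `schemeHalf r V ((p, α, β, m), ε) + schemeHalf r V ((p, α, β, m), -ε)`
is one step of the scheme with diffusion `α`, damping `m` and time step `r ε ^ 2`, applied to the
gauged function `e ^ (i β (y - p.2)) V`. Being the even part of a smooth function, the scheme is
consistent to second order in `ε`. -/
noncomputable def schemeHalf (r : ℝ) (V : ℝ × ℝ → ℂ) (w : ((ℝ × ℝ) × ℝ × ℝ × ℝ) × ℝ) : ℂ :=
  let ((p, α, β, m), s) := w
  ((1 - 2 * (r * α) - m * (r * s ^ 2)) / 2) • V (p + (r * s ^ 2, 0))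
    + (r * α) • (cexp (s • (I * β)) * V (p + (r * s ^ 2, s)))

variable {V : ℝ × ℝ → ℂ}

lemma contDiff_schemeHalf {k : WithTop ℕ∞} (hV : ContDiff ℝ k V) (r : ℝ) :
    ContDiff ℝ k (schemeHalf r V) := by
  have hofReal : ContDiff ℝ k ((↑) : ℝ → ℂ) := Complex.ofRealCLM.contDiff
  unfold schemeHalf
  fun_prop

lemma hasDerivAt_comp_parabola (hV : Differentiable ℝ V) (p : ℝ × ℝ) (r κ s : ℝ) :
    HasDerivAt (fun s => V (p + (r * s ^ 2, κ * s)))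
      (s • (2 * r) • fderiv ℝ V (p + (r * s ^ 2, κ * s)) (1, 0)
        + κ • fderiv ℝ V (p + (r * s ^ 2, κ * s)) (0, 1)) s := by
  have hpath : HasDerivAt (fun s => p + (r * s ^ 2, κ * s)) (r * (2 * s), κ) s := by
    refine HasDerivAt.const_add p (HasDerivAt.prodMk ?_ ?_)
    · simpa using (hasDerivAt_pow 2 s).const_mul r
    · simpa using (hasDerivAt_id s).const_mul κ
  refine ((hV _).hasFDerivAt.comp_hasDerivAt s hpath).congr_deriv ?_
  rw [← map_smul, ← map_smul, ← map_smul, ← map_add]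
  congr 1
  ext
  · simp only [Prod.fst_add, Prod.smul_fst, smul_eq_mul]
    ring
  · simp

lemma hasDerivAt_deriv_comp_parabola (hV : ContDiff ℝ 2 V) (p : ℝ × ℝ) (r κ : ℝ) :
    HasDerivAt (fun s => s • (2 * r) • fderiv ℝ V (p + (r * s ^ 2, κ * s)) (1, 0)
        + κ • fderiv ℝ V (p + (r * s ^ 2, κ * s)) (0, 1))
      ((2 * r) • fderiv ℝ V p (1, 0)
        + κ ^ 2 • fderiv ℝ (fun q => fderiv ℝ V q (0, 1)) p (0, 1)) 0 := by
  have hV' (e : ℝ × ℝ) : Differentiable ℝ fun q => fderiv ℝ V q e :=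
    ((hV.fderiv_right (m := 1) le_rfl).clm_apply contDiff_const).differentiable one_ne_zero
  have htime := (hasDerivAt_id (0 : ℝ)).smul
    ((hasDerivAt_comp_parabola (hV' (1, 0)) p r κ 0).const_smul (2 * r))
  have hspace := (hasDerivAt_comp_parabola (hV' (0, 1)) p r κ 0).const_smul κ
  refine (htime.add hspace).congr_deriv ?_
  simp [Prod.mk_zero_zero, sq, mul_assoc]

lemma hasDerivAt_schemeHalf_coeff (r α m s : ℝ) :
    HasDerivAt (fun s => (1 - 2 * (r * α) - m * (r * s ^ 2)) / 2) (s * -(m * r)) s := by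
  refine ((((hasDerivAt_pow 2 s).const_mul r).const_mul m).const_sub _).div_const 2
    |>.congr_deriv ?_
  push_cast
  ring

lemma deriv_deriv_schemeHalf (hV : ContDiff ℝ 2 V) (r : ℝ) (p : ℝ × ℝ) (α β m : ℝ) :
    deriv (deriv fun s => schemeHalf r V ((p, α, β, m), s)) 0
      = r • parabolicOp α (α * β) (α * β ^ 2 + m) V p := by
  have hcoeff := hasDerivAt_schemeHalf_coeff r α m
  have hcoeff' := hasDerivAt_mul_const (x := (0 : ℝ)) (-(m * r))
  have hgauge (s : ℝ) : HasDerivAt (fun s : ℝ => cexp (s • (I * β)))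
      (cexp (s • (I * β)) * (I * β)) s := by
    simpa using ((hasDerivAt_id s).smul_const (I * (β : ℂ))).cexp
  have hpath (κ s : ℝ) := hasDerivAt_comp_parabola (hV.differentiable two_ne_zero) p r κ s
  have hpath' (κ : ℝ) := hasDerivAt_deriv_comp_parabola hV p r κ
  have hfirst (s : ℝ) := ((hcoeff s).smul (hpath 0 s)).add
    (((hgauge s).mul (hpath 1 s)).const_smul (r * α))
  have hsecond := (((hcoeff 0).smul (hpath' 0)).add (hcoeff'.smul (hpath 0 0))).add
    (((((hgauge 0).mul_const (I * β)).mul (hpath 1 0)).add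
      ((hgauge 0).mul (hpath' 1))).const_smul (r * α))
  have hhalf : (fun s => schemeHalf r V ((p, α, β, m), s)) = fun s =>
      ((1 - 2 * (r * α) - m * (r * s ^ 2)) / 2) • V (p + (r * s ^ 2, 0 * s))
        + (r * α) • (cexp (s • (I * β)) * V (p + (r * s ^ 2, 1 * s))) := by
    simp only [schemeHalf, zero_mul, one_mul]
  rw [hhalf]
  refine (congrArg (deriv · 0) (funext fun s => (hfirst s).deriv)).trans (hsecond.deriv.trans ?_)
  simp only [ne_eq, OfNat.ofNat_ne_zero, not_false_eq_true, zero_pow, mul_zero, sub_zero,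
    real_smul, ofReal_mul, ofReal_ofNat, zero_smul, add_zero, ofReal_div, ofReal_sub, ofReal_one,
    mul_neg, zero_mul, neg_zero, Prod.mk_zero_zero, smul_zero, neg_smul, zero_add, exp_zero,
    one_mul, one_smul, one_pow, smul_add, parabolicOp, ofReal_add, ofReal_pow]
  linear_combination (r * α * β ^ 2 * V p : ℂ) * I_sq

lemma schemeHalf_zero (r : ℝ) (V : ℝ × ℝ → ℂ) (p : ℝ × ℝ) (α β m : ℝ) :
    (2 : ℝ) • schemeHalf r V ((p, α, β, m), 0) = V p := by
  simp only [schemeHalf, ne_eq, OfNat.ofNat_ne_zero, not_false_eq_true, zero_pow, mul_zero,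
    zero_smul, exp_zero, one_mul, Prod.mk_zero_zero, add_zero, ← add_smul, smul_smul]
  convert one_smul ℝ (V p) using 2
  ring

lemma norm_schemeHalf_le {r α β m μ s : ℝ} {p : ℝ × ℝ} (hrα : 0 ≤ r * α) (hr : 0 ≤ r)
    (hμm : μ ≤ m) (hcfl : 2 * (r * α) + m * (r * s ^ 2) ≤ 1) :
    ‖schemeHalf r V ((p, α, β, m), s)‖ ≤ (1 - μ * (r * s ^ 2) - 2 * (r * α)) / 2
      * ‖V (p + (r * s ^ 2, 0))‖ + r * α * ‖V (p + (r * s ^ 2, s))‖ := by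
  have hgauge : ‖cexp (s • (I * β))‖ = 1 := by
    simpa [mul_comm, mul_left_comm] using norm_exp_ofReal_mul_I (s * β)
  refine (norm_add_le _ _).trans ?_
  rw [norm_smul, norm_smul, norm_mul (cexp _), hgauge, one_mul, Real.norm_of_nonneg hrα,
    Real.norm_of_nonneg (by linarith)]
  have : μ * (r * s ^ 2) ≤ m * (r * s ^ 2) := by gcongr
  gcongr ?_ * _ + _
  linarith

lemma norm_schemeHalf_add_le_schemeStep {R r β m μ ε : ℝ} {p : ℝ × ℝ} {a : ℝ × ℝ → ℝ}
    (ha : 0 ≤ r * a p) (hr : 0 ≤ r) (hμm : μ ≤ m)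
    (hcfl : 2 * (r * a p) + m * (r * ε ^ 2) ≤ 1) (hp : -R ≤ p.1) :
    ‖schemeHalf r V ((p, a p, β, m), ε) + schemeHalf r V ((p, a p, β, m), -ε)‖
      ≤ schemeStep R (r * ε ^ 2) ε r (μ * (r * ε ^ 2)) a (fun q => ‖V q‖) p := by
  have hplus := norm_schemeHalf_le (V := V) (β := β) (p := p) ha hr hμm hcfl
  have hminus := norm_schemeHalf_le (V := V) (β := β) (p := p) (s := -ε) ha hr hμm
    (by rwa [neg_sq])
  rw [neg_sq] at hminus
  rw [schemeStep_apply_of_le hp]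
  linarith [norm_add_le (schemeHalf r V ((p, a p, β, m), ε)) (schemeHalf r V ((p, a p, β, m), -ε))]

lemma eventually_norm_schemeHalf_add_sub_le {K : Set ((ℝ × ℝ) × ℝ × ℝ × ℝ)} {r η : ℝ}
    (hV : ContDiff ℝ 2 V) (hr : 0 < r) (hK : IsCompact K) (hη : 0 < η) :
    ∀ᶠ ε in 𝓝[>] (0 : ℝ), ∀ p α β m, (p, α, β, m) ∈ K →
      ‖schemeHalf r V ((p, α, β, m), ε) + schemeHalf r V ((p, α, β, m), -ε) - V p
        - (r * ε ^ 2) • parabolicOp α (α * β) (α * β ^ 2 + m) V p‖ ≤ r * ε ^ 2 * η := by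
  filter_upwards [eventually_norm_secondDifference_sub_le (contDiff_schemeHalf hV r) hK
    (mul_pos hr hη)] with ε hε p α β m hx
  have := hε _ hx
  rwa [schemeHalf_zero, deriv_deriv_schemeHalf hV, smul_smul, mul_comm (ε ^ 2) r,
    mul_right_comm] at this

lemma norm_le_norm_add_norm_add_norm_sub_sub {E : Type*} [SeminormedAddCommGroup E] (x y z : E) :
    ‖x‖ ≤ ‖y‖ + ‖z‖ + ‖y - x - z‖ := by
  calc ‖x‖ = ‖y - z - (y - x - z)‖ := by congr 1; abel
    _ ≤ ‖y‖ + ‖z‖ + ‖y - x - z‖ := (norm_sub_le _ _).trans (by gcongr; exact norm_sub_le _ _)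

-- Completing the square, `c = a β ^ 2 + m` with `β = b / a`, lets the gauge absorb the first-order
-- term, so that `‖V‖` satisfies the scheme with the damping `μ ≤ m`.
lemma norm_le_schemeStep_add {a : ℝ × ℝ → ℝ} {b c μ r R ε η : ℝ} {p : ℝ × ℝ} (ha : 0 < a p)
    (hr : 0 < r) (hμc : μ ≤ c - b ^ 2 / a p)
    (hcfl : 2 * (r * a p) + (c - b ^ 2 / a p) * (r * ε ^ 2) ≤ 1) (hp : -R ≤ p.1)
    (hconsistent : ‖schemeHalf r V ((p, a p, b / a p, c - b ^ 2 / a p), ε)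
        + schemeHalf r V ((p, a p, b / a p, c - b ^ 2 / a p), -ε) - V p
        - (r * ε ^ 2) • parabolicOp (a p) (a p * (b / a p))
          (a p * (b / a p) ^ 2 + (c - b ^ 2 / a p)) V p‖ ≤ r * ε ^ 2 * η) :
    ‖V p‖ ≤ schemeStep R (r * ε ^ 2) ε r (μ * (r * ε ^ 2)) a (fun q => ‖V q‖) p
      + r * ε ^ 2 * (‖parabolicOp (a p) b c V p‖ + η) := by
  have hstep := norm_schemeHalf_add_le_schemeStep (V := V) (β := b / a p)
    (mul_pos hr ha).le hr.le hμc hcfl hp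
  have hsquare : a p * (b / a p) ^ 2 + (c - b ^ 2 / a p) = c := by
    field_simp
    ring
  have hsource : ‖(r * ε ^ 2) • parabolicOp (a p) b c V p‖ =
      r * ε ^ 2 * ‖parabolicOp (a p) b c V p‖ := by
    rw [norm_smul, Real.norm_of_nonneg (by positivity)]
  rw [mul_div_cancel₀ _ ha.ne', hsquare] at hconsistent
  rw [mul_add, ← hsource, ← add_assoc]
  exact (norm_le_norm_add_norm_add_norm_sub_sub _ _ _).trans (by gcongr)

theorem eventually_norm_le_schemeStep_add {a b c : ℝ × ℝ → ℝ} {δ C μ r R η : ℝ}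
    (hV : ContDiff ℝ 2 V) (hVc : HasCompactSupport V) (hδ : 0 < δ) (haδ : ∀ p, δ ≤ a p)
    (haδ' : ∀ p, a p ≤ δ⁻¹) (hcC : ∀ p, c p ≤ C) (hμ : 0 ≤ μ)
    (hμc : ∀ p, μ ≤ c p - b p ^ 2 / a p) (hr : 0 < r) (hcfl : 2 * (r * δ⁻¹) < 1)
    (hR : ∀ p ∈ tsupport V, -R ≤ p.1) (hη : 0 < η) :
    ∀ᶠ ε in 𝓝[>] (0 : ℝ), (fun p => ‖V p‖) ≤
      schemeStep R (r * ε ^ 2) ε r (μ * (r * ε ^ 2)) a (fun p => ‖V p‖) + (r * ε ^ 2) • fun p =>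
        ‖parabolicOp (a p) (b p) (c p) V p‖ + (tsupport V).indicator (fun _ => η) p := by
  have ha0 p : 0 < a p := hδ.trans_le (haδ p)
  have hmC p : c p - b p ^ 2 / a p ≤ C :=
    (sub_le_self _ (div_nonneg (sq_nonneg _) (ha0 p).le)).trans (hcC p)
  have hβ p : |b p / a p| ≤ √(C / δ) :=
    abs_div_le_sqrt_div_of_sq_div_le hδ (haδ p) (by linarith [hμc p, hcC p])
  have hsmall : ∀ᶠ ε in 𝓝[>] (0 : ℝ), 2 * (r * δ⁻¹) + C * (r * ε ^ 2) < 1 := by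
    refine nhdsWithin_le_nhds (ContinuousAt.eventually_lt ?_ continuousAt_const (by simpa))
    fun_prop
  have hconsistent := eventually_norm_schemeHalf_add_sub_le hV hr (hVc.prod
    (isCompact_Icc.prod (isCompact_Icc.prod isCompact_Icc) :
      IsCompact (Set.Icc δ δ⁻¹ ×ˢ Set.Icc (-√(C / δ)) √(C / δ) ×ˢ Set.Icc 0 C))) hη
  filter_upwards [hsmall, hconsistent] with ε hε hconsistent p
  have hcfl p : 2 * (r * a p) + (c p - b p ^ 2 / a p) * (r * ε ^ 2) ≤ 1 := by
    grw [hmC p, haδ' p]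
    exact hε.le
  by_cases hp : p ∈ tsupport V
  · rw [Pi.add_apply, Pi.smul_apply, Set.indicator_of_mem hp]
    exact norm_le_schemeStep_add (ha0 p) hr (hμc p) (hcfl p) (hR p hp) (hconsistent _ _ _ _
      ⟨hp, ⟨haδ p, haδ' p⟩, abs_le.1 (hβ p), hμ.trans (hμc p), hmC p⟩)
  · have hcfl' p : μ * (r * ε ^ 2) + 2 * (r * a p) ≤ 1 := by
      grw [hμc p, add_comm]
      exact hcfl p
    have hstep := schemeStep_nonneg (R := R) (h := r * ε ^ 2) (ε := ε) hr.le (fun p => (ha0 p).le)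
      hcfl' (fun p => norm_nonneg (V p)) p
    have hVp : (fun p => ‖V p‖) p = 0 := by simp [image_eq_zero_of_notMem_tsupport hp]
    rw [Pi.add_apply, Pi.smul_apply, hVp, Set.indicator_of_notMem hp, add_zero]
    exact add_nonneg hstep (smul_nonneg (by positivity) (norm_nonneg _))

end Consistency

section ParabolicEstimate

open Filter Topology

variable {V : ℝ × ℝ → ℂ} {a b c : ℝ × ℝ → ℝ} {δ C μ : ℝ}

lemma parabolicOp_of_notMem_tsupport (a b c : ℝ) {p : ℝ × ℝ} (hp : p ∉ tsupport V) :
    parabolicOp a b c V p = 0 := by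
  have hp' : p ∉ tsupport fun q => fderiv ℝ V q (0, 1) :=
    fun h => hp (tsupport_fderiv_apply_subset ℝ _ h)
  simp [parabolicOp, fderiv_of_notMem_tsupport ℝ hp, fderiv_of_notMem_tsupport ℝ hp',
    image_eq_zero_of_notMem_tsupport hp]

lemma memLp_parabolicOp {A B : ℝ} (hV : ContDiff ℝ 2 V) (hVc : HasCompactSupport V)
    (ha : Measurable a) (hb : Measurable b) (hc : Measurable c) (hA : ∀ p, |a p| ≤ A)
    (hB : ∀ p, |b p| ≤ B) (hC : ∀ p, |c p| ≤ C) :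
    MemLp (fun p => parabolicOp (a p) (b p) (c p) V p) 2 := by
  have hV' (e : ℝ × ℝ) : ContDiff ℝ 1 fun q => fderiv ℝ V q e :=
    (hV.fderiv_right (m := 1) le_rfl).clm_apply contDiff_const
  have hVc' (e : ℝ × ℝ) : HasCompactSupport fun q => fderiv ℝ V q e := hVc.fderiv_apply ℝ e
  have h₀ : MemLp V 2 := hV.continuous.memLp_of_hasCompactSupport hVc
  have h₁ (e : ℝ × ℝ) : MemLp (fun q => fderiv ℝ V q e) 2 :=
    (hV' e).continuous.memLp_of_hasCompactSupport (hVc' e)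
  have h₂ : MemLp (fun p => fderiv ℝ (fun q => fderiv ℝ V q (0, 1)) p (0, 1)) 2 :=
    (((hV' (0, 1)).continuous_fderiv one_ne_zero).clm_apply
      continuous_const).memLp_of_hasCompactSupport ((hVc' (0, 1)).fderiv_apply ℝ (0, 1))
  simp only [parabolicOp, mul_assoc, ← Complex.real_smul]
  exact (((h₁ _).add (memLp_bounded_smul ha hA h₂)).add
    (((memLp_bounded_smul hb hB (h₁ _)).const_mul _).const_mul 2)).sub
      (memLp_bounded_smul hc hC h₀)

theorem mul_sqrt_integral_norm_le_of_error {η : ℝ} (hV : ContDiff ℝ 2 V)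
    (hVc : HasCompactSupport V) (hδ : 0 < δ)
    (ha : Measurable a) (haδ : ∀ p, δ ≤ a p) (haδ' : ∀ p, a p ≤ δ⁻¹)
    (hf : MemLp (fun p => parabolicOp (a p) (b p) (c p) V p) 2)
    (hcC : ∀ p, c p ≤ C) (hμ : 0 ≤ μ) (hμc : ∀ p, μ ≤ c p - b p ^ 2 / a p) (hη : 0 < η) :
    μ * √(∫ p, ‖V p‖ ^ 2) ≤ (3 / δ ^ 2 + 1) * √(∫ p, (‖parabolicOp (a p) (b p) (c p) V p‖
      + (tsupport V).indicator (fun _ => η) p) ^ 2) := by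
  have hδ' : δ ≤ 1 := le_one_of_le_inv ((haδ 0).trans (haδ' 0))
  obtain ⟨R, hR⟩ := hVc.isCompact.exists_bound_of_continuousOn continuous_fst.continuousOn
  set r := δ ^ 3 / 32 with hr
  have hr0 : 0 < r := by positivity
  have hcfl : 2 * (r * δ⁻¹) < 1 := by linarith [hr ▸ cube_div_mul_le hδ hδ' le_rfl]
  have hsmall : ∀ᶠ ε in 𝓝[>] (0 : ℝ), μ * (r * ε ^ 2) < 1 / 2 := by
    refine nhdsWithin_le_nhds (ContinuousAt.eventually_lt ?_ continuousAt_const (by simp))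
    fun_prop
  obtain ⟨ε, hle, hε, hε0⟩ := ((eventually_norm_le_schemeStep_add hV hVc hδ haδ haδ' hcC hμ hμc hr0
    hcfl (fun p hp => (abs_le.1 (hR p hp)).1) hη).and (hsmall.and self_mem_nhdsWithin)).exists
  have hh : 0 < r * ε ^ 2 := mul_pos hr0 (pow_pos hε0 2)
  have hS : MeasurableSet (tsupport V) := (isClosed_tsupport V).measurableSet
  have hmem : ∀ p, R < p.1 → p ∉ tsupport V := fun p hp hpV => hp.not_ge (abs_le.1 (hR p hpV)).2
  have hscheme := mul_sqrt_integral_le_of_le_schemeStep_add hδ hr hh (by positivity) hε.le ha haδ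
    haδ' (hV.continuous.memLp_of_hasCompactSupport hVc).norm
    ((hf.norm.add (memLp_indicator_const 2 hS η
      (.inr hVc.isCompact.measure_lt_top.ne))).const_smul (r * ε ^ 2))
    (fun p => norm_nonneg _) (R' := R)
    (fun p hp => by simp [image_eq_zero_of_notMem_tsupport (hmem p hp)])
    (fun p hp => by simp [parabolicOp_of_notMem_tsupport _ _ _ (hmem p hp), hmem p hp]) hle
  simp only [Pi.smul_apply, Pi.add_apply, smul_eq_mul] at hscheme
  rw [sqrt_integral_const_mul_sq hh.le] at hscheme
  refine le_of_mul_le_mul_right ?_ hh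
  linarith

theorem mul_sqrt_integral_norm_le_parabolicOp (hV : ContDiff ℝ 2 V) (hVc : HasCompactSupport V)
    (hδ : 0 < δ) (ha : Measurable a) (hb : Measurable b) (hc : Measurable c)
    (haδ : ∀ p, δ ≤ a p) (haδ' : ∀ p, a p ≤ δ⁻¹) (hcC : ∀ p, c p ≤ C) (hμ : 0 ≤ μ)
    (hμc : ∀ p, μ ≤ c p - b p ^ 2 / a p) :
    μ * √(∫ p, ‖V p‖ ^ 2)
      ≤ (3 / δ ^ 2 + 1) * √(∫ p, ‖parabolicOp (a p) (b p) (c p) V p‖ ^ 2) := by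
  have hsq p : 0 ≤ b p ^ 2 / a p := div_nonneg (sq_nonneg _) (hδ.le.trans (haδ p))
  have hB p : |b p| ≤ √(C * δ⁻¹) :=
    abs_le_sqrt_mul_of_sq_div_le (hδ.trans_le (haδ p)) (haδ' p) (by linarith [hμc p, hcC p])
  have hf : MemLp (fun p => parabolicOp (a p) (b p) (c p) V p) 2 :=
    memLp_parabolicOp (A := δ⁻¹) (C := C) hV hVc ha hb hc
      (fun p => abs_le_inv_of_le hδ (haδ p) (haδ' p)) hB
      (fun p => abs_le.2 ⟨by linarith [hμc p, hsq p, hcC p], hcC p⟩)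
  have hS : MemLp ((tsupport V).indicator fun _ => (1 : ℝ)) 2 :=
    memLp_indicator_const 2 (isClosed_tsupport V).measurableSet 1
      (.inr hVc.isCompact.measure_lt_top.ne)
  have herror : ∀ᶠ η in 𝓝[>] (0 : ℝ), μ * √(∫ p, ‖V p‖ ^ 2) ≤ (3 / δ ^ 2 + 1)
      * (√(∫ p, ‖parabolicOp (a p) (b p) (c p) V p‖ ^ 2)
        + η * √(∫ p, (tsupport V).indicator (fun _ => (1 : ℝ)) p ^ 2)) := by
    filter_upwards [self_mem_nhdsWithin] with η hη
    refine (mul_sqrt_integral_norm_le_of_error hV hVc hδ ha haδ haδ' hf hcC hμ hμc hη).trans ?_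
    have hη' (p) : (tsupport V).indicator (fun _ => η) p
        = η * (tsupport V).indicator (fun _ => (1 : ℝ)) p := by
      by_cases hp : p ∈ tsupport V <;> simp [hp]
    simp_rw [hη']
    rw [← sqrt_integral_const_mul_sq (le_of_lt hη)]
    gcongr
    exact sqrt_integral_add_sq_le hf.norm (hS.const_mul η)
  refine ge_of_tendsto (Tendsto.mono_left ?_ nhdsWithin_le_nhds) herror
  exact (by fun_prop : Continuous fun η : ℝ => (3 / δ ^ 2 + 1)
      * (√(∫ p, ‖parabolicOp (a p) (b p) (c p) V p‖ ^ 2)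
        + η * √(∫ p, (tsupport V).indicator (fun _ => (1 : ℝ)) p ^ 2))).tendsto' 0 _ (by simp)

end ParabolicEstimate

section ParametricIntegral

lemma apply_eq_zero_of_notMem_image_snd_tsupport {P X E : Type*} [TopologicalSpace P]
    [TopologicalSpace X] [Zero E] {F : P × X → E} (q : P) {x : X}
    (hx : x ∉ Prod.snd '' tsupport F) : F (q, x) = 0 :=
  image_eq_zero_of_notMem_tsupport fun h => hx ⟨(q, x), h, rfl⟩

variable {P X E : Type*} [NormedAddCommGroup P] [NormedAddCommGroup X]
  [NormedAddCommGroup E] {F : P × X → E}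

section Derivative

variable [NormedSpace ℝ P] [NormedSpace ℝ X] [NormedSpace ℝ E]

lemma continuous_fderiv_comp_inl (hF : ContDiff ℝ 1 F) :
    Continuous fun z => (fderiv ℝ F z).comp (.inl ℝ P X) :=
  (hF.continuous_fderiv one_ne_zero).clm_comp_const _

lemma hasCompactSupport_fderiv_comp_inl (hFc : HasCompactSupport F) :
    HasCompactSupport fun z => (fderiv ℝ F z).comp (.inl ℝ P X) :=
  (hFc.fderiv ℝ).comp_left (g := fun L : P × X →L[ℝ] E => L.comp (.inl ℝ P X)) (by simp)

end Derivative

variable [MeasurableSpace X] [BorelSpace X] {μ : Measure X} [IsFiniteMeasureOnCompacts μ]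

lemma integrable_of_hasCompactSupport_prod (hF : Continuous F) (hFc : HasCompactSupport F)
    (q : P) : Integrable (fun x => F (q, x)) μ :=
  (hF.comp (.prodMk_right q)).integrable_of_hasCompactSupport
    (.intro (hFc.isCompact.image continuous_snd)
      fun _ => apply_eq_zero_of_notMem_image_snd_tsupport q)

variable [NormedSpace ℝ P] [NormedSpace ℝ X] [NormedSpace ℝ E]

lemma integrable_fderiv_comp_inl (hF : ContDiff ℝ 1 F) (hFc : HasCompactSupport F) (q : P) :
    Integrable (fun x => (fderiv ℝ F (q, x)).comp (.inl ℝ P X)) μ :=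
  integrable_of_hasCompactSupport_prod (F := fun z => (fderiv ℝ F z).comp (.inl ℝ P X))
    (continuous_fderiv_comp_inl hF) (hasCompactSupport_fderiv_comp_inl hFc) q

variable [FiniteDimensional ℝ X]

lemma hasFDerivAt_integral_of_hasCompactSupport (hF : ContDiff ℝ 1 F) (hFc : HasCompactSupport F)
    (q : P) : HasFDerivAt (fun q => ∫ x, F (q, x) ∂μ)
      (∫ x, (fderiv ℝ F (q, x)).comp (.inl ℝ P X) ∂μ) q := by
  have hcont := continuous_fderiv_comp_inl (F := F) hF
  have hK : IsCompact (Prod.snd '' tsupport F) := hFc.isCompact.image continuous_snd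
  obtain ⟨C, hC⟩ := hcont.bounded_above_of_compact_support
    (hasCompactSupport_fderiv_comp_inl hFc)
  refine hasFDerivAt_integral_of_dominated_of_fderiv_le Filter.univ_mem
    (F' := fun q x => (fderiv ℝ F (q, x)).comp (.inl ℝ P X))
    (bound := (Prod.snd '' tsupport F).indicator fun _ => C)
    (.of_forall fun q => (integrable_of_hasCompactSupport_prod hF.continuous hFc q).1)
    (integrable_of_hasCompactSupport_prod hF.continuous hFc q)
    (hcont.comp (.prodMk_right q)).aestronglyMeasurable
    (.of_forall fun x q _ => ?_)
    ((integrable_indicator_iff hK.measurableSet).2 (integrableOn_const hK.measure_lt_top.ne))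
    (.of_forall fun x q _ => ?_)
  · by_cases hx : x ∈ Prod.snd '' tsupport F
    · rw [Set.indicator_of_mem hx]
      exact hC _
    · have : (q, x) ∉ tsupport F := fun h => hx ⟨(q, x), h, rfl⟩
      simp [hx, fderiv_of_notMem_tsupport ℝ this]
  · exact ((hF.differentiable one_ne_zero _).hasFDerivAt).comp q (hasFDerivAt_prodMk_left q x)

universe v

-- The induction replaces `E` by `P →L[ℝ] E`, which has to stay in the same universe.
lemma contDiff_integral_of_hasCompactSupport {P E : Type v} [NormedAddCommGroup P]
    [NormedSpace ℝ P] [NormedAddCommGroup E] [NormedSpace ℝ E] {F : P × X → E} {k : ℕ}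
    (hF : ContDiff ℝ k F) (hFc : HasCompactSupport F) : ContDiff ℝ k fun q => ∫ x, F (q, x) ∂μ := by
  induction k generalizing E with
  | zero =>
    refine contDiff_zero.2 (continuousOn_univ.1 ?_)
    exact continuousOn_integral_of_compact_support (hFc.isCompact.image continuous_snd)
      hF.continuous.continuousOn fun q x _ => apply_eq_zero_of_notMem_image_snd_tsupport q
  | succ k ih =>
    have hderiv : ContDiff ℝ k fun z => (fderiv ℝ F z).comp (.inl ℝ P X) :=
      (hF.fderiv_right le_rfl).clm_comp contDiff_const
    exact contDiff_succ_iff_hasFDerivAt.2 ⟨_, ih hderiv (hasCompactSupport_fderiv_comp_inl hFc),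
      hasFDerivAt_integral_of_hasCompactSupport (hF.of_le (by simp)) hFc⟩

end ParametricIntegral

section PartialDerivatives

variable {d : ℕ} {u : ℝ × (Fin d → ℝ) → ℝ} {k l : WithTop ℕ∞}

lemma contDiff_pdt (hu : ContDiff ℝ k u) (hlk : l + 1 ≤ k) : ContDiff ℝ l (pdt u) :=
  (hu.fderiv_right hlk).clm_apply contDiff_const

lemma contDiff_pdx (hu : ContDiff ℝ k u) (hlk : l + 1 ≤ k) (j : Fin d) : ContDiff ℝ l (pdx j u) :=
  (hu.fderiv_right hlk).clm_apply contDiff_const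

lemma hasCompactSupport_pdt (huc : HasCompactSupport u) : HasCompactSupport (pdt u) :=
  huc.fderiv_apply ℝ _

lemma hasCompactSupport_pdx (huc : HasCompactSupport u) (j : Fin d) :
    HasCompactSupport (pdx j u) :=
  huc.fderiv_apply ℝ _

end PartialDerivatives

section PartialFourier

open Complex

variable {n : ℕ}

/-- The Fourier character `x' ↦ e ^ (-i ξ · x')`. -/
noncomputable def fourierKernel (ξ x : Fin n → ℝ) : ℂ :=
  cexp (-I * ((∑ j, ξ j * x j : ℝ) : ℂ))

/-- The identification of `((t, x¹), x')` with `(t, (x¹, x'))`. -/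
noncomputable def splitCoord (n : ℕ) : ((ℝ × ℝ) × (Fin n → ℝ)) ≃L[ℝ] ℝ × (Fin (n + 1) → ℝ) :=
  (ContinuousLinearEquiv.prodAssoc ℝ ℝ ℝ (Fin n → ℝ)).trans
    ((ContinuousLinearEquiv.refl ℝ ℝ).prodCongr (Fin.consEquivL ℝ fun _ : Fin (n + 1) => ℝ))

lemma splitCoord_apply (q : ℝ × ℝ) (x : Fin n → ℝ) :
    splitCoord n (q, x) = (q.1, Fin.cons q.2 x) :=
  rfl

/-- The integrand of `pFourier`, as a function of `((t, x¹), x')`. -/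
noncomputable def pFourierIntegrand (u : ℝ × (Fin (n + 1) → ℝ) → ℝ) (ξ : Fin n → ℝ)
    (z : (ℝ × ℝ) × (Fin n → ℝ)) : ℂ :=
  (u (splitCoord n z) : ℂ) * fourierKernel ξ z.2

lemma pFourier_eq_integral (u : ℝ × (Fin (n + 1) → ℝ) → ℝ) (q : ℝ × ℝ) (ξ : Fin n → ℝ) :
    pFourier u q.1 q.2 ξ = ∫ x, pFourierIntegrand u ξ (q, x) :=
  rfl

lemma contDiff_fourierKernel {k : WithTop ℕ∞} (ξ : Fin n → ℝ) :
    ContDiff ℝ k (fourierKernel ξ) := by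
  have hofReal : ContDiff ℝ k ((↑) : ℝ → ℂ) := Complex.ofRealCLM.contDiff
  unfold fourierKernel
  fun_prop

lemma fderiv_fourierKernel_single (ξ x : Fin n → ℝ) (j : Fin n) :
    fderiv ℝ (fourierKernel ξ) x (Pi.single j 1) = -I * ξ j * fourierKernel ξ x := by
  let phase : (Fin n → ℝ) →L[ℝ] ℂ :=
    (-I) • Complex.ofRealCLM.comp (∑ j, ξ j • ContinuousLinearMap.proj (R := ℝ) j)
  have hphase : HasFDerivAt (fun x : Fin n → ℝ => -I * ((∑ j, ξ j * x j : ℝ) : ℂ)) phase x :=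
    phase.hasFDerivAt.congr_of_eventuallyEq (.of_forall fun y => by simp [phase])
  rw [show fourierKernel ξ = fun x => cexp (-I * ((∑ j, ξ j * x j : ℝ) : ℂ)) from rfl,
    hphase.cexp.fderiv]
  simp [phase, Pi.single_apply, mul_comm]

variable {u : ℝ × (Fin (n + 1) → ℝ) → ℝ}

lemma contDiff_pFourierIntegrand {k : WithTop ℕ∞} (hu : ContDiff ℝ k u) (ξ : Fin n → ℝ) :
    ContDiff ℝ k (pFourierIntegrand u ξ) :=
  (Complex.ofRealCLM.contDiff.comp (hu.comp (splitCoord n).contDiff)).mul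
    ((contDiff_fourierKernel ξ).comp contDiff_snd)

lemma hasCompactSupport_pFourierIntegrand (huc : HasCompactSupport u) (ξ : Fin n → ℝ) :
    HasCompactSupport (pFourierIntegrand u ξ) :=
  ((huc.comp_homeomorph (splitCoord n).toHomeomorph).comp_left Complex.ofReal_zero).mul_right

lemma integrable_pFourierIntegrand (hu : Continuous u) (huc : HasCompactSupport u) (ξ : Fin n → ℝ)
    (q : ℝ × ℝ) : Integrable fun x => pFourierIntegrand u ξ (q, x) :=
  integrable_of_hasCompactSupport_prod
    (contDiff_zero.1 (contDiff_pFourierIntegrand (contDiff_zero.2 hu) ξ))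
    (hasCompactSupport_pFourierIntegrand huc ξ) q

lemma contDiff_pFourier {k : ℕ} (hu : ContDiff ℝ k u) (huc : HasCompactSupport u)
    (ξ : Fin n → ℝ) : ContDiff ℝ k fun q : ℝ × ℝ => pFourier u q.1 q.2 ξ :=
  contDiff_integral_of_hasCompactSupport (contDiff_pFourierIntegrand hu ξ)
    (hasCompactSupport_pFourierIntegrand huc ξ)

lemma hasCompactSupport_pFourier (huc : HasCompactSupport u) (ξ : Fin n → ℝ) :
    HasCompactSupport fun q : ℝ × ℝ => pFourier u q.1 q.2 ξ := by
  have hK := (hasCompactSupport_pFourierIntegrand huc ξ).isCompact.image continuous_fst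
  refine .intro hK fun q hq => ?_
  rw [pFourier_eq_integral]
  refine integral_eq_zero_of_ae (.of_forall fun x => ?_)
  exact image_eq_zero_of_notMem_tsupport fun h => hq ⟨(q, x), h, rfl⟩

lemma hasFDerivAt_ofReal_comp_splitCoord (hu : Differentiable ℝ u) (z : (ℝ × ℝ) × (Fin n → ℝ)) :
    HasFDerivAt (fun z => (u (splitCoord n z) : ℂ))
      (Complex.ofRealCLM.comp ((fderiv ℝ u (splitCoord n z)).comp
        (splitCoord n : (ℝ × ℝ) × (Fin n → ℝ) →L[ℝ] ℝ × (Fin (n + 1) → ℝ)))) z :=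
  Complex.ofRealCLM.hasFDerivAt.comp z
    ((hu _).hasFDerivAt.comp z (splitCoord n).hasFDerivAt)

lemma fderiv_pFourierIntegrand_inl (hu : Differentiable ℝ u) (ξ : Fin n → ℝ)
    (z : (ℝ × ℝ) × (Fin n → ℝ)) (e : ℝ × ℝ) :
    fderiv ℝ (pFourierIntegrand u ξ) z (e, 0)
      = pFourierIntegrand (fun p => fderiv ℝ u p (splitCoord n (e, 0))) ξ z := by
  have hkernel : HasFDerivAt (fun z : (ℝ × ℝ) × (Fin n → ℝ) => fourierKernel ξ z.2) _ z :=
    (((contDiff_fourierKernel ξ).differentiable one_ne_zero _).hasFDerivAt).comp z hasFDerivAt_snd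
  have hprod : HasFDerivAt (pFourierIntegrand u ξ) _ z :=
    (hasFDerivAt_ofReal_comp_splitCoord hu z).mul hkernel
  rw [hprod.fderiv]
  simp [pFourierIntegrand, mul_comm]

lemma fderiv_pFourier (hu : ContDiff ℝ 1 u) (huc : HasCompactSupport u) (ξ : Fin n → ℝ)
    (q e : ℝ × ℝ) : fderiv ℝ (fun q : ℝ × ℝ => pFourier u q.1 q.2 ξ) q e
      = pFourier (fun p => fderiv ℝ u p (splitCoord n (e, 0))) q.1 q.2 ξ := by
  have hF := contDiff_pFourierIntegrand hu ξ
  have hFc := hasCompactSupport_pFourierIntegrand huc ξ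
  have hderiv : HasFDerivAt (fun q : ℝ × ℝ => pFourier u q.1 q.2 ξ) _ q :=
    hasFDerivAt_integral_of_hasCompactSupport hF hFc q
  rw [hderiv.fderiv, ContinuousLinearMap.integral_apply (integrable_fderiv_comp_inl hF hFc q),
    pFourier_eq_integral]
  exact integral_congr_ae (.of_forall fun x =>
    fderiv_pFourierIntegrand_inl (hu.differentiable one_ne_zero) ξ (q, x) e)

lemma fderiv_pFourier_time (hu : ContDiff ℝ 1 u) (huc : HasCompactSupport u) (ξ : Fin n → ℝ)
    (q : ℝ × ℝ) : fderiv ℝ (fun q : ℝ × ℝ => pFourier u q.1 q.2 ξ) q (1, 0)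
      = pFourier (pdt u) q.1 q.2 ξ := by
  have hdir : splitCoord n ((1, 0), 0) = (1, 0) :=
    Prod.ext rfl (funext fun i => Fin.cases rfl (fun _ => rfl) i)
  rw [fderiv_pFourier hu huc, hdir]
  rfl

lemma fderiv_pFourier_space (hu : ContDiff ℝ 1 u) (huc : HasCompactSupport u) (ξ : Fin n → ℝ)
    (q : ℝ × ℝ) : fderiv ℝ (fun q : ℝ × ℝ => pFourier u q.1 q.2 ξ) q (0, 1)
      = pFourier (pdx 0 u) q.1 q.2 ξ := by
  have hdir : splitCoord n ((0, 1), 0) = (0, Pi.single 0 1) :=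
    Prod.ext rfl (funext fun i => Fin.cases (by simp [splitCoord_apply])
      (fun _ => by simp [splitCoord_apply]) i)
  rw [fderiv_pFourier hu huc, hdir]
  rfl

lemma fderiv_ofReal_comp_splitCoord_single (hu : Differentiable ℝ u) (q : ℝ × ℝ) (x : Fin n → ℝ)
    (j : Fin n) : fderiv ℝ (fun x => (u (splitCoord n (q, x)) : ℂ)) x (Pi.single j 1)
      = pdx j.succ u (splitCoord n (q, x)) := by
  have hdir : splitCoord n (0, Pi.single j 1) = (0, Pi.single j.succ 1) :=
    Prod.ext rfl (funext fun i => Fin.cases (by simp [splitCoord_apply])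
      (fun i => by simp [splitCoord_apply, Pi.single_apply]) i)
  have hslice : HasFDerivAt (fun x => (u (splitCoord n (q, x)) : ℂ)) _ x :=
    (hasFDerivAt_ofReal_comp_splitCoord hu (q, x)).comp x (hasFDerivAt_prodMk_right q x)
  rw [hslice.fderiv, pdx, ← hdir]
  rfl

lemma pFourier_pdx_succ (hu : ContDiff ℝ 1 u) (huc : HasCompactSupport u) (ξ : Fin n → ℝ)
    (q : ℝ × ℝ) (j : Fin n) :
    pFourier (pdx j.succ u) q.1 q.2 ξ = I * ξ j * pFourier u q.1 q.2 ξ := by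
  have hdiff := hu.differentiable one_ne_zero
  have hkernel (x : Fin n → ℝ) : (u (splitCoord n (q, x)) : ℂ) *
      fderiv ℝ (fourierKernel ξ) x (Pi.single j 1) = -I * ξ j * pFourierIntegrand u ξ (q, x) := by
    rw [fderiv_fourierKernel_single, pFourierIntegrand]
    ring
  have hderiv (x : Fin n → ℝ) : fderiv ℝ (fun x => (u (splitCoord n (q, x)) : ℂ)) x
      (Pi.single j 1) * fourierKernel ξ x = pFourierIntegrand (pdx j.succ u) ξ (q, x) := by
    rw [fderiv_ofReal_comp_splitCoord_single hdiff, pFourierIntegrand]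
  have hint := integrable_pFourierIntegrand hu.continuous huc ξ q
  have hint' := integrable_pFourierIntegrand (contDiff_pdx hu (zero_add 1).le j.succ).continuous
    (hasCompactSupport_pdx huc j.succ) ξ q
  have hparts := integral_mul_fderiv_eq_neg_fderiv_mul_of_integrable (μ := volume)
    (f := fun x => (u (splitCoord n (q, x)) : ℂ)) (g := fourierKernel ξ) (v := Pi.single j 1)
    (by simpa only [hderiv] using hint') (by simpa only [hkernel] using hint.const_mul _) hint
    (fun x _ => ((hasFDerivAt_ofReal_comp_splitCoord hdiff (q, x)).comp x
      (hasFDerivAt_prodMk_right q x)).differentiableAt)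
    (fun x _ => (contDiff_fourierKernel ξ).differentiable one_ne_zero x)
  simp only [hkernel, hderiv, integral_const_mul, ← pFourier_eq_integral] at hparts
  linear_combination hparts

lemma pFourier_pdxx_zero_zero (hu : ContDiff ℝ 2 u) (huc : HasCompactSupport u) (ξ : Fin n → ℝ)
    (q : ℝ × ℝ) :
    pFourier (pdxx 0 0 u) q.1 q.2 ξ
      = fderiv ℝ (fun q => fderiv ℝ (fun q : ℝ × ℝ => pFourier u q.1 q.2 ξ) q (0, 1)) q (0, 1) := by
  simp only [fderiv_pFourier_space (hu.of_le one_le_two) huc]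
  rw [fderiv_pFourier_space (contDiff_pdx hu one_add_one_eq_two.le 0) (hasCompactSupport_pdx huc 0),
    pdxx]

lemma pFourier_pdxx_zero_succ (hu : ContDiff ℝ 2 u) (huc : HasCompactSupport u) (ξ : Fin n → ℝ)
    (q : ℝ × ℝ) (k : Fin n) : pFourier (pdxx 0 k.succ u) q.1 q.2 ξ
      = I * ξ k * fderiv ℝ (fun q : ℝ × ℝ => pFourier u q.1 q.2 ξ) q (0, 1) := by
  have hu1 := hu.of_le one_le_two
  rw [pdxx, ← fderiv_pFourier_space (contDiff_pdx hu one_add_one_eq_two.le _)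
    (hasCompactSupport_pdx huc _)]
  simp only [pFourier_pdx_succ hu1 huc]
  rw [fderiv_const_mul ((contDiff_pFourier (k := 1) hu1 huc ξ).differentiable one_ne_zero q)]
  rfl

lemma pFourier_pdxx_succ_zero (hu : ContDiff ℝ 2 u) (huc : HasCompactSupport u) (ξ : Fin n → ℝ)
    (q : ℝ × ℝ) (j : Fin n) : pFourier (pdxx j.succ 0 u) q.1 q.2 ξ
      = I * ξ j * fderiv ℝ (fun q : ℝ × ℝ => pFourier u q.1 q.2 ξ) q (0, 1) := by
  rw [pdxx, pFourier_pdx_succ (contDiff_pdx hu one_add_one_eq_two.le 0)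
    (hasCompactSupport_pdx huc 0), fderiv_pFourier_space (hu.of_le one_le_two) huc]

lemma pFourier_pdxx_succ_succ (hu : ContDiff ℝ 2 u) (huc : HasCompactSupport u) (ξ : Fin n → ℝ)
    (q : ℝ × ℝ) (j k : Fin n) : pFourier (pdxx j.succ k.succ u) q.1 q.2 ξ
      = -(ξ j * ξ k * pFourier u q.1 q.2 ξ) := by
  rw [pdxx, pFourier_pdx_succ (contDiff_pdx hu one_add_one_eq_two.le _)
    (hasCompactSupport_pdx huc _), pFourier_pdx_succ (hu.of_le one_le_two) huc]
  linear_combination (ξ j * ξ k * pFourier u q.1 q.2 ξ) * I_sq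

lemma pFourier_operator (hu : ContDiff ℝ 2 u) (huc : HasCompactSupport u)
    (a : ℝ × ℝ → Fin (n + 1) → Fin (n + 1) → ℝ) (lam : ℝ) (ξ : Fin n → ℝ) (q : ℝ × ℝ) :
    pFourier (fun p => pdt u p + (∑ j, ∑ k, a (p.1, p.2 0) j k * pdxx j k u p) - lam * u p)
        q.1 q.2 ξ
      = pFourier (pdt u) q.1 q.2 ξ + (∑ j, ∑ k, a q j k * pFourier (pdxx j k u) q.1 q.2 ξ)
        - lam * pFourier u q.1 q.2 ξ := by
  have hint_t := integrable_pFourierIntegrand (contDiff_pdt hu one_add_one_eq_two.le).continuous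
    (hasCompactSupport_pdt huc) ξ q
  have hint_xx (j k : Fin (n + 1)) :
      Integrable fun x => (a q j k : ℂ) * pFourierIntegrand (pdxx j k u) ξ (q, x) :=
    (integrable_pFourierIntegrand
      (contDiff_pdx (contDiff_pdx hu one_add_one_eq_two.le k) (zero_add 1).le j).continuous
      (hasCompactSupport_pdx (hasCompactSupport_pdx huc k) j) ξ q).const_mul _
  have hint_sum (j : Fin (n + 1)) := integrable_finsetSum Finset.univ fun k _ => hint_xx j k
  have hint_sum_sum := integrable_finsetSum Finset.univ fun j _ => hint_sum j
  have hint_add : Integrable fun x => pFourierIntegrand (pdt u) ξ (q, x)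
      + ∑ j, ∑ k, (a q j k : ℂ) * pFourierIntegrand (pdxx j k u) ξ (q, x) :=
    hint_t.add hint_sum_sum
  have hint_u := (integrable_pFourierIntegrand hu.continuous huc ξ q).const_mul (lam : ℂ)
  calc pFourier _ q.1 q.2 ξ
      = ∫ x, (pFourierIntegrand (pdt u) ξ (q, x)
          + ∑ j, ∑ k, (a q j k : ℂ) * pFourierIntegrand (pdxx j k u) ξ (q, x))
          - lam * pFourierIntegrand u ξ (q, x) := by
        refine integral_congr_ae (.of_forall fun x => ?_)
        simp only [pFourierIntegrand, splitCoord_apply, Fin.cons_zero, fourierKernel]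
        push_cast
        simp only [add_mul, sub_mul, Finset.sum_mul, mul_assoc]
    _ = _ := by
        rw [integral_sub hint_add hint_u, integral_add hint_t hint_sum_sum,
          integral_finsetSum _ fun j _ => hint_sum j]
        simp only [integral_finsetSum _ fun k _ => hint_xx _ k, integral_const_mul,
          pFourier_eq_integral]

/-- The mixed coefficient `∑ k, a^{1k} ξ_k`, `k ≥ 2`, of the Fourier-transformed operator. -/
def mixedSymbol (A : Fin (n + 1) → Fin (n + 1) → ℝ) (ξ : Fin n → ℝ) : ℝ :=
  ∑ k, A 0 k.succ * ξ k

/-- The tangential quadratic form `∑ j k, a^{jk} ξ_j ξ_k`, `j, k ≥ 2`, of the Fourier-transformed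
operator. -/
def tangentialSymbol (A : Fin (n + 1) → Fin (n + 1) → ℝ) (ξ : Fin n → ℝ) : ℝ :=
  ∑ j, ∑ k, A j.succ k.succ * ξ j * ξ k

lemma pFourier_operator_eq_parabolicOp (hu : ContDiff ℝ 2 u) (huc : HasCompactSupport u)
    {a : ℝ × ℝ → Fin (n + 1) → Fin (n + 1) → ℝ} (hsymm : ∀ q j k, a q j k = a q k j) (lam : ℝ)
    (ξ : Fin n → ℝ) (q : ℝ × ℝ) :
    pFourier (fun p => pdt u p + (∑ j, ∑ k, a (p.1, p.2 0) j k * pdxx j k u p) - lam * u p)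
        q.1 q.2 ξ
      = parabolicOp (a q 0 0) (mixedSymbol (a q) ξ) (tangentialSymbol (a q) ξ + lam)
          (fun q => pFourier u q.1 q.2 ξ) q := by
  rw [pFourier_operator hu huc, parabolicOp, fderiv_pFourier_time (hu.of_le one_le_two) huc]
  simp only [Fin.sum_univ_succ, Finset.sum_add_distrib, hsymm q (Fin.succ _) 0,
    pFourier_pdxx_zero_zero hu huc, pFourier_pdxx_zero_succ hu huc,
    pFourier_pdxx_succ_zero hu huc, pFourier_pdxx_succ_succ hu huc]
  generalize fderiv ℝ (fun q : ℝ × ℝ => pFourier u q.1 q.2 ξ) q (0, 1) = V_y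
  have hmixed : ∑ k : Fin n, (a q 0 k.succ : ℂ) * (I * ξ k * V_y)
      = I * mixedSymbol (a q) ξ * V_y := by
    simp only [mixedSymbol, ofReal_sum, ofReal_mul, Finset.mul_sum, Finset.sum_mul]
    exact Finset.sum_congr rfl fun k _ => by ring
  have htangential : ∑ j : Fin n, ∑ k : Fin n,
      (a q j.succ k.succ : ℂ) * -(ξ j * ξ k * pFourier u q.1 q.2 ξ)
        = -(tangentialSymbol (a q) ξ * pFourier u q.1 q.2 ξ) := by
    simp only [tangentialSymbol, ofReal_sum, ofReal_mul, Finset.sum_mul,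
      ← Finset.sum_neg_distrib]
    exact Finset.sum_congr rfl fun j _ => Finset.sum_congr rfl fun k _ => by ring
  rw [hmixed, htangential, ofReal_add]
  ring

end PartialFourier

section Ellipticity

variable {n : ℕ} {A : Fin (n + 1) → Fin (n + 1) → ℝ}

lemma sum_mul_cons_mul_cons (hsymm : ∀ j k, A j k = A k j) (s : ℝ) (ξ : Fin n → ℝ) :
    ∑ j, ∑ k, A j k * (Fin.cons s ξ : Fin (n + 1) → ℝ) j * (Fin.cons s ξ : Fin (n + 1) → ℝ) k
      = A 0 0 * s ^ 2 + 2 * s * mixedSymbol A ξ + tangentialSymbol A ξ := by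
  have hmixed : ∑ k : Fin n, A 0 k.succ * s * ξ k = s * mixedSymbol A ξ := by
    rw [mixedSymbol, Finset.mul_sum]
    exact Finset.sum_congr rfl fun k _ => by ring
  have hmixed' : ∑ k : Fin n, A 0 k.succ * ξ k * s = s * mixedSymbol A ξ := by
    rw [mixedSymbol, Finset.mul_sum]
    exact Finset.sum_congr rfl fun k _ => by ring
  simp only [Fin.sum_univ_succ, Finset.sum_add_distrib, Fin.cons_zero, Fin.cons_succ,
    hsymm (Fin.succ _) 0]
  rw [hmixed, hmixed', tangentialSymbol]
  ring

variable {δ Λ : ℝ}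

lemma le_apply_zero_zero (hA : ∀ θ : Fin (n + 1) → ℝ,
    δ * ∑ j, θ j ^ 2 ≤ ∑ j, ∑ k, A j k * θ j * θ k) : δ ≤ A 0 0 := by
  simpa [Fin.sum_univ_succ] using hA (Fin.cons 1 0)

lemma apply_zero_zero_le (hA : ∀ θ : Fin (n + 1) → ℝ,
    ∑ j, ∑ k, A j k * θ j * θ k ≤ Λ * ∑ j, θ j ^ 2) : A 0 0 ≤ Λ := by
  simpa [Fin.sum_univ_succ] using hA (Fin.cons 1 0)

lemma tangentialSymbol_le (hA : ∀ θ : Fin (n + 1) → ℝ,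
    ∑ j, ∑ k, A j k * θ j * θ k ≤ Λ * ∑ j, θ j ^ 2) (ξ : Fin n → ℝ) :
    tangentialSymbol A ξ ≤ Λ * ∑ j, ξ j ^ 2 := by
  simpa [Fin.sum_univ_succ, tangentialSymbol] using hA (Fin.cons 0 ξ)

lemma mul_sum_sq_le_schurComplement (hδ : 0 < δ) (hsymm : ∀ j k, A j k = A k j)
    (hA : ∀ θ : Fin (n + 1) → ℝ, δ * ∑ j, θ j ^ 2 ≤ ∑ j, ∑ k, A j k * θ j * θ k)
    (ξ : Fin n → ℝ) :
    δ * ∑ j, ξ j ^ 2 ≤ tangentialSymbol A ξ - mixedSymbol A ξ ^ 2 / A 0 0 := by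
  have hpos : 0 < A 0 0 := hδ.trans_le (le_apply_zero_zero hA)
  set s := -(mixedSymbol A ξ / A 0 0) with hs
  calc δ * ∑ j, ξ j ^ 2
      ≤ δ * ∑ j, (Fin.cons s ξ : Fin (n + 1) → ℝ) j ^ 2 := by
        gcongr
        rw [Fin.sum_univ_succ]
        simpa using sq_nonneg s
    _ ≤ A 0 0 * s ^ 2 + 2 * s * mixedSymbol A ξ + tangentialSymbol A ξ :=
        (hA _).trans_eq (sum_mul_cons_mul_cons hsymm s ξ)
    _ = tangentialSymbol A ξ - mixedSymbol A ξ ^ 2 / A 0 0 := by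
        rw [hs]
        field_simp
        ring

end Ellipticity

theorem stmt4_general {n : ℕ} {δ : ℝ} (hδ : 0 < δ)
    {a : ℝ × ℝ → Fin (n + 1) → Fin (n + 1) → ℝ} (ha : ∀ j k, Measurable fun q => a q j k)
    (hsymm : ∀ q j k, a q j k = a q k j)
    (hell : ∀ (q : ℝ × ℝ) (θ : Fin (n + 1) → ℝ),
      δ * ∑ j, (θ j) ^ 2 ≤ ∑ j, ∑ k, a q j k * θ j * θ k ∧
      ∑ j, ∑ k, a q j k * θ j * θ k ≤ δ⁻¹ * ∑ j, (θ j) ^ 2)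
    {u : ℝ × (Fin (n + 1) → ℝ) → ℝ} (hu : ContDiff ℝ 2 u) (huc : HasCompactSupport u)
    {lam : ℝ} (hlam : 0 ≤ lam) (ξ : Fin n → ℝ) :
    ((∑ j, (ξ j) ^ 2) + lam) * √(∫ q : ℝ × ℝ, ‖pFourier u q.1 q.2 ξ‖ ^ 2)
      ≤ (3 / δ ^ 2 + 1) / δ * √(∫ q : ℝ × ℝ,
          ‖pFourier (fun p =>
              pdt u p + (∑ j, ∑ k, a (p.1, p.2 0) j k * pdxx j k u p) - lam * u p)
            q.1 q.2 ξ‖ ^ 2) := by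
  have hlower q := le_apply_zero_zero fun θ => (hell q θ).1
  have hupper q := apply_zero_zero_le fun θ => (hell q θ).2
  have hδ_le_one : δ ≤ 1 := le_one_of_le_inv ((hlower 0).trans (hupper 0))
  have hestimate := mul_sqrt_integral_norm_le_parabolicOp
    (contDiff_pFourier (k := 2) hu huc ξ) (hasCompactSupport_pFourier huc ξ) hδ
    (a := fun q => a q 0 0) (b := fun q => mixedSymbol (a q) ξ)
    (c := fun q => tangentialSymbol (a q) ξ + lam) (C := δ⁻¹ * ∑ j, ξ j ^ 2 + lam)
    (μ := δ * (∑ j, ξ j ^ 2 + lam)) (ha 0 0)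
    (by unfold mixedSymbol; fun_prop) (by unfold tangentialSymbol; fun_prop) hlower hupper
    (fun q => by gcongr; exact tangentialSymbol_le (fun θ => (hell q θ).2) ξ) (by positivity)
    (fun q => by
      have := mul_sum_sq_le_schurComplement hδ (hsymm q) (fun θ => (hell q θ).1) ξ
      nlinarith)
  simp only [pFourier_operator_eq_parabolicOp hu huc hsymm]
  rw [div_mul_eq_mul_div, le_div_iff₀ hδ]
  linarith

theorem stmt4 (n : ℕ) (hn : 1 ≤ n) (δ : ℝ) (hδ : δ ∈ Set.Ioo (0 : ℝ) 1) :
    ∃ N : ℝ, 0 < N ∧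
      ∀ a : ℝ × ℝ → Fin (n + 1) → Fin (n + 1) → ℝ,
        (∀ j k, ContDiff ℝ (⊤ : ℕ∞) fun q => a q j k) →
        (∀ q j k, a q j k = a q k j) →
        (∀ (q : ℝ × ℝ) (θ : Fin (n + 1) → ℝ),
          δ * ∑ j, (θ j) ^ 2 ≤ ∑ j, ∑ k, a q j k * θ j * θ k ∧
          ∑ j, ∑ k, a q j k * θ j * θ k ≤ δ⁻¹ * ∑ j, (θ j) ^ 2) →
        ∀ u : ℝ × (Fin (n + 1) → ℝ) → ℝ, ContDiff ℝ (⊤ : ℕ∞) u → HasCompactSupport u →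
          ∀ lam : ℝ, 0 ≤ lam →
            ∀ ξ : Fin n → ℝ, 0 < (∑ j, (ξ j) ^ 2) + lam →
              ((∑ j, (ξ j) ^ 2) + lam) *
                  Real.sqrt (∫ q : ℝ × ℝ, ‖pFourier u q.1 q.2 ξ‖ ^ 2)
                ≤ N * Real.sqrt (∫ q : ℝ × ℝ,
                    ‖pFourier (fun p =>
                        pdt u p + (∑ j, ∑ k, a (p.1, p.2 0) j k * pdxx j k u p)
                          - lam * u p) q.1 q.2 ξ‖ ^ 2) := by
  have hδ_pos := hδ.1
  exact ⟨(3 / δ ^ 2 + 1) / δ, by positivity,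
    fun _ ha hsymm hell _ hu huc _ hlam ξ _ =>
      stmt4_general hδ_pos (fun j k => (ha j k).continuous.measurable) hsymm hell
        (contDiff_infty.1 hu 2) huc hlam ξ⟩
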